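/- arXiv:2411.12237 — 2 statements merged into one kernel-verified Lean document; each statement's English description precedes it below -/
import Mathlib

section
/- For every ε > 0 and every 0 < η < 1/2 the following holds for all sufficiently large n: every (n,d,λ)-graph G with 2048λ/η² < d ≤ η·n^{1/2−ε} contains a K_{⌊(1−η)d⌋}^{(ℓ)}-subdivision, where ℓ = 2⌈log(η²n/4096)⌉ + 5 (log denoting the natural logarithm). -/
/-! The proof embeds the paths one at a time by the Friedman–Pippenger method, in the form that also
allows parts of the embedded graph to be removed again.

With `W` the set of used vertices and `f x` the number of new neighbours still reserved for `x`,
the invariant `Extendable` says that every set `U` of at most `2m` vertices has at least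
`∑_{x ∈ U} f x` unused neighbours. If medium-sized sets expand strictly (`Big`), tight sets are closed
under union, and so a new neighbour can be attached to any vertex with positive demand
(`Extendable.step`). Attached vertices can also be given back (`Extendable.rollback`).

To link two branch vertices by a path of prescribed length, a tree is grown from a new neighbour of
each, with layers growing by a factor of at most three; the depths differ by one, to give the
length the right parity. Both last layers have `M + 1 > λ n / d` vertices, so there is an edge between
them. It closes a path of exactly the required length, and everything off that path is
given back (`connect`). Each link therefore permanently uses only the vertices of its own path.
With `O(d²)` pairs and paths of length `O(log n)` this amounts to `o(n)` vertices in total, since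
`d ≤ η n^{1/2-ε}` (`embed`).

The invariant must hold at the start with demand `t = ⌊(1 - η) d⌋` at each of the `t` branch vertices and
`3` elsewhere. A `t`-set minimizing the number of adjacent pairs plus the number of common neighbours
over pairs consists, by an exchange argument and averaging, of vertices each of which shares at most
`η d / 2` of its neighbourhood with the others (`exists_branch`). Sets consisting mostly of branch
vertices then expand by private neighbourhoods, and all other small sets by the spectral
bound `|Γ(X)| (d² |X| / n + λ²) ≥ d² |X|` (`card_Nb_mul_ge`, `demand_le`). The number of layers is
`⌈log (η² n / 4096)⌉ + O(1)`, which is enough because `3 ≥ e`.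
-/


open SimpleGraph

noncomputable def avgDeg {V : Type*} (G : SimpleGraph V) : ℝ :=
  2 * (Nat.card G.edgeSet : ℝ) / (Nat.card V : ℝ)

noncomputable def minDeg {V : Type*} (G : SimpleGraph V) : ℕ :=
  sInf (Set.range fun v => Nat.card (G.neighborSet v))

noncomputable def rho (ε₁ k x : ℝ) : ℝ :=
  if x < k / 5 then 0 else ε₁ / Real.log (15 * x / k) ^ 2

def extNbhd {V : Type*} (G : SimpleGraph V) (X : Set V) : Set V :=
  {v | v ∉ X ∧ ∃ x ∈ X, G.Adj x v}

def IsRobustExpander {V : Type*} (G : SimpleGraph V) (ε₁ k : ℝ) : Prop :=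
  ∀ X : Set V, k / 2 ≤ (X.ncard : ℝ) → (X.ncard : ℝ) ≤ (Nat.card V : ℝ) / 2 →
    ∀ F : Set (Sym2 V), F ⊆ G.edgeSet →
      (F.ncard : ℝ) ≤ avgDeg G * rho ε₁ k (X.ncard : ℝ) * (X.ncard : ℝ) →
      rho ε₁ k (X.ncard : ℝ) * (X.ncard : ℝ) ≤ ((extNbhd (G.deleteEdges F) X).ncard : ℝ)

def GraphDense {V : Type*} (G : SimpleGraph V) (s t γ : ℝ) : Prop :=
  ∀ U : Set V, (U.ncard : ℝ) ≤ s →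
    ∀ W : Set (Sym2 V), W ⊆ G.edgeSet → (W.ncard : ℝ) ≤ t →
      γ ≤ avgDeg ((G.deleteEdges W).induce Uᶜ)

noncomputable def mParam (ε₁ ε₂ : ℝ) (n : ℕ) (d : ℝ) : ℝ :=
  2 / ε₁ * Real.log (15 * n / (ε₂ * d)) ^ 3

def HasCliqueImmersion {V : Type*} (G : SimpleGraph V) (t : ℕ) : Prop :=
  ∃ φ : Fin t → V, Function.Injective φ ∧
    ∃ P : ∀ i j : Fin t, i < j → G.Walk (φ i) (φ j),
      (∀ i j (h : i < j), (P i j h).IsPath) ∧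
      ∀ i j (h : i < j), ∀ i' j' (h' : i' < j'), (i, j) ≠ (i', j') →
        ∀ e ∈ (P i j h).edges, e ∉ (P i' j' h').edges

def HasBalancedCliqueImmersion {V : Type*} (G : SimpleGraph V) (t ℓ : ℕ) : Prop :=
  ∃ φ : Fin t → V, Function.Injective φ ∧
    ∃ P : ∀ i j : Fin t, i < j → G.Walk (φ i) (φ j),
      (∀ i j (h : i < j), (P i j h).IsPath ∧ (P i j h).length = ℓ + 1) ∧
      ∀ i j (h : i < j), ∀ i' j' (h' : i' < j'), (i, j) ≠ (i', j') →
        ∀ e ∈ (P i j h).edges, e ∉ (P i' j' h').edges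

def HasCliqueSubdivision {V : Type*} (G : SimpleGraph V) (t : ℕ) : Prop :=
  ∃ φ : Fin t → V, Function.Injective φ ∧
    ∃ P : ∀ i j : Fin t, i < j → G.Walk (φ i) (φ j),
      (∀ i j (h : i < j), (P i j h).IsPath) ∧
      (∀ i j (h : i < j) (k : Fin t), φ k ∈ (P i j h).support → k = i ∨ k = j) ∧
      ∀ i j (h : i < j), ∀ i' j' (h' : i' < j'), (i, j) ≠ (i', j') →
        ∀ v, v ∈ (P i j h).support → v ∈ (P i' j' h').support →
          (v = φ i ∨ v = φ j) ∧ (v = φ i' ∨ v = φ j')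

def HasBalancedCliqueSubdivision {V : Type*} (G : SimpleGraph V) (t ℓ : ℕ) : Prop :=
  ∃ φ : Fin t → V, Function.Injective φ ∧
    ∃ P : ∀ i j : Fin t, i < j → G.Walk (φ i) (φ j),
      (∀ i j (h : i < j), (P i j h).IsPath ∧ (P i j h).length = ℓ + 1) ∧
      (∀ i j (h : i < j) (k : Fin t), φ k ∈ (P i j h).support → k = i ∨ k = j) ∧
      ∀ i j (h : i < j), ∀ i' j' (h' : i' < j'), (i, j) ≠ (i', j') →
        ∀ v, v ∈ (P i j h).support → v ∈ (P i' j' h').support →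
          (v = φ i ∨ v = φ j) ∧ (v = φ i' ∨ v = φ j')

def IsNDL {V : Type*} [Fintype V] [DecidableEq V] (G : SimpleGraph V) [DecidableRel G.Adj]
    (n d : ℕ) (lam : ℝ) : Prop :=
  Fintype.card V = n ∧ G.IsRegularOfDegree d ∧
    ∃ hH : (G.adjMatrix ℝ).IsHermitian, ∃ v₀ : V,
      (∀ v : V, hH.eigenvalues v ≤ hH.eigenvalues v₀) ∧
      ∀ v : V, v ≠ v₀ → |hH.eigenvalues v| ≤ lam

def IsExpansion {V : Type*} {G : SimpleGraph V} (F : G.Subgraph) (v : V) (D m : ℝ) : Prop :=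
  ∃ hv : v ∈ F.verts,
    (Nat.card F.verts : ℝ) = D ∧
      ∀ u : F.verts, F.coe.Reachable ⟨v, hv⟩ u ∧ (F.coe.dist ⟨v, hv⟩ u : ℝ) ≤ m

structure AdjusterIn {V : Type*} (G : SimpleGraph V) (D m : ℝ) (k : ℕ) where
  u₁ : V
  u₂ : V
  I₁ : G.Subgraph
  I₂ : G.Subgraph
  A : Set V
  disjA₁ : Disjoint A I₁.verts
  disjA₂ : Disjoint A I₂.verts
  disjI : Disjoint I₁.verts I₂.verts
  exp₁ : IsExpansion I₁ u₁ D m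
  exp₂ : IsExpansion I₂ u₂ D m
  cardA : (A.ncard : ℝ) ≤ 10 * m * k
  paths : ∃ ℓ : ℕ, ∀ i : ℕ, i ≤ k → ∃ p : G.Walk u₁ u₂,
    p.IsPath ∧ p.length = ℓ + 2 * i ∧ ∀ w ∈ p.support, w ∈ A ∪ {u₁, u₂}

def AdjusterIn.vertexSet {V : Type*} {G : SimpleGraph V} {D m : ℝ} {k : ℕ}
    (a : AdjusterIn G D m k) : Set V :=
  a.A ∪ a.I₁.verts ∪ a.I₂.verts

def HasAdjuster {V : Type*} (G : SimpleGraph V) (D m : ℝ) (k : ℕ) : Prop :=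
  Nonempty (AdjusterIn G D m k)

structure UnitIn {V : Type*} (G : SimpleGraph V) (d₁ d₂ h : ℝ) where
  core : V
  numStars : ℕ
  hNum : d₁ ≤ (numStars : ℝ)
  center : Fin numStars → V
  leaves : Fin numStars → Finset V
  toPath : ∀ i, G.Walk core (center i)
  hLeaves : ∀ i, d₂ ≤ ((leaves i).card : ℝ)
  core_not_leaf : ∀ i, core ∉ leaves i
  core_ne_center : ∀ i, core ≠ center i
  center_not_leaf : ∀ i, center i ∉ leaves i
  star_adj : ∀ i, ∀ u ∈ leaves i, G.Adj (center i) u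
  stars_disjoint : ∀ i j, i ≠ j →
    Disjoint (insert (center i) (↑(leaves i) : Set V)) (insert (center j) ↑(leaves j))
  path_isPath : ∀ i, (toPath i).IsPath
  path_length : ∀ i, ((toPath i).length : ℝ) ≤ h
  paths_meet_in_core : ∀ i j, i ≠ j →
    ∀ u, u ∈ (toPath i).support → u ∈ (toPath j).support → u = core
  paths_meet_stars : ∀ i j, ∀ u ∈ (toPath i).support,
    u ∈ insert (center j) (↑(leaves j) : Set V) → i = j ∧ u = center j

def UnitIn.edgeSet {V : Type*} {G : SimpleGraph V} {d₁ d₂ h : ℝ} (U : UnitIn G d₁ d₂ h) :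
    Set (Sym2 V) :=
  (⋃ i, ⋃ u ∈ U.leaves i, {s(U.center i, u)}) ∪ ⋃ i, {e | e ∈ (U.toPath i).edges}

def HasUnit {V : Type*} (G : SimpleGraph V) (d₁ d₂ h : ℝ) : Prop :=
  Nonempty (UnitIn G d₁ d₂ h)

def HasTwoStarCollections {V : Type*} (G : SimpleGraph V) (k₁ s₁ k₂ s₂ : ℕ) : Prop :=
  ∃ (c : Fin k₁ ⊕ Fin k₂ → V) (L : Fin k₁ ⊕ Fin k₂ → Finset V),
    (∀ i, c i ∉ L i) ∧
    (∀ i, ∀ u ∈ L i, G.Adj (c i) u) ∧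
    (∀ i : Fin k₁, (L (Sum.inl i)).card = s₁) ∧
    (∀ j : Fin k₂, (L (Sum.inr j)).card = s₂) ∧
    ∀ i j, i ≠ j → Disjoint (insert (c i) (↑(L i) : Set V)) (insert (c j) ↑(L j))

def LinkedPaths {V : Type*} (G : SimpleGraph V) (U : Set V) (W : Set (Sym2 V))
    (a b c e : V) (ℓ : ℕ) (m : ℝ) : Prop :=
  ∃ (P : G.Walk a b) (Q : G.Walk c e),
    P.IsPath ∧ Q.IsPath ∧
    (∀ w ∈ P.support, w ∉ U) ∧ (∀ w ∈ Q.support, w ∉ U) ∧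
    (∀ e' ∈ P.edges, e' ∉ W) ∧ (∀ e' ∈ Q.edges, e' ∉ W) ∧
    (∀ w ∈ P.support, w ∉ Q.support) ∧
    (ℓ : ℝ) ≤ (P.length : ℝ) + (Q.length : ℝ) ∧
    (P.length : ℝ) + (Q.length : ℝ) ≤ (ℓ : ℝ) + 10 * m

namespace BalSub

/-! ### Extendable demand functions -/

section Growth

variable {V : Type} [Fintype V] [DecidableEq V] (G : SimpleGraph V) [DecidableRel G.Adj]

/-- The neighbourhood `Γ(U) = ⋃_{u ∈ U} N(u)`; it may meet `U`. -/
def Nb (U : Finset V) : Finset V := U.biUnion fun v => G.neighborFinset v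

/-- The Friedman–Pippenger condition. `W` is the set of vertices already used and `f x` the number
of further unused neighbours reserved for `x`: every set `U` of at most `2m` vertices sees at least
`∑_{x ∈ U} f x` unused vertices. Demands are integers, so that subtraction is exact. -/
def Extendable (m : ℕ) (W : Finset V) (f : V → ℤ) : Prop :=
  ∀ U : Finset V, U.card ≤ 2 * m → ∑ x ∈ U, f x ≤ ((Nb G U \ W).card : ℤ)

/-- Medium-sized sets expand with room to spare: the inequality in `Extendable` is strict for
`m ≤ |U| ≤ 2m` even after any `N` vertices have been deleted. -/
def Big (m : ℕ) (f : V → ℤ) (N : ℕ) : Prop :=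
  ∀ U : Finset V, m ≤ U.card → U.card ≤ 2 * m → ∑ x ∈ U, f x + N < ((Nb G U).card : ℤ)

variable {G}

lemma mem_Nb {U : Finset V} {y : V} : y ∈ Nb G U ↔ ∃ x ∈ U, G.Adj x y := by
  simp [Nb]

lemma Nb_mono {U U' : Finset V} (h : U ⊆ U') : Nb G U ⊆ Nb G U' :=
  Finset.biUnion_subset_biUnion_of_subset_left _ h

lemma Big.mono {m : ℕ} {f f' : V → ℤ} {N N' : ℕ} (h : Big G m f N) (hf : ∀ x, f' x ≤ f x)
    (hN : N' ≤ N) : Big G m f' N' := by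
  intro U h1 h2
  have := h U h1 h2
  have h3 : ∑ x ∈ U, f' x ≤ ∑ x ∈ U, f x := Finset.sum_le_sum fun x _ => hf x
  omega

lemma Extendable.mono {m : ℕ} {W : Finset V} {f f' : V → ℤ} (h : Extendable G m W f)
    (hf : ∀ x, f' x ≤ f x) : Extendable G m W f' := fun U h1 =>
  (Finset.sum_le_sum fun x _ => hf x).trans (h U h1)

/-- Tight sets are closed under union: `U ↦ |Γ(U) \ W|` is submodular, and tight sets
have fewer than `m` elements because larger ones expand strictly. -/
lemma tight_union {m : ℕ} {W : Finset V} {f : V → ℤ} (h : Extendable G m W f)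
    (hb : Big G m f W.card) {U U' : Finset V} (hU : U.card ≤ 2 * m) (hU' : U'.card ≤ 2 * m)
    (tU : ∑ x ∈ U, f x = ((Nb G U \ W).card : ℤ))
    (tU' : ∑ x ∈ U', f x = ((Nb G U' \ W).card : ℤ)) :
    (U ∪ U').card ≤ 2 * m ∧ ∑ x ∈ U ∪ U', f x = ((Nb G (U ∪ U') \ W).card : ℤ) := by
  have small : ∀ X : Finset V, X.card ≤ 2 * m → ∑ x ∈ X, f x = ((Nb G X \ W).card : ℤ) →
      X.card < m := by
    intro X h1 h2
    by_contra h3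
    have h4 := hb X (by omega) h1
    have h5 := Finset.le_card_sdiff W (Nb G X)
    omega
  have s1 := small U hU tU
  have s2 := small U' hU' tU'
  have hc : (U ∪ U').card ≤ 2 * m := (Finset.card_union_le _ _).trans (by omega)
  refine ⟨hc, le_antisymm (h _ hc) ?_⟩
  have hi := h (U ∩ U') ((Finset.card_le_card Finset.inter_subset_left).trans hU)
  have e1 := Finset.sum_union_inter (s₁ := U) (s₂ := U') (f := f)
  have e2 := Finset.card_union_add_card_inter (Nb G U \ W) (Nb G U' \ W)
  have e3 : Nb G (U ∪ U') \ W = (Nb G U \ W) ∪ (Nb G U' \ W) := by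
    simp only [Nb, Finset.union_biUnion, Finset.union_sdiff_distrib]
  have e4 : (Nb G (U ∩ U') \ W).card ≤ ((Nb G U \ W) ∩ (Nb G U' \ W)).card := by
    apply Finset.card_le_card
    intro y hy
    rw [Finset.mem_sdiff] at hy
    simp only [Finset.mem_inter, Finset.mem_sdiff]
    exact ⟨⟨Nb_mono Finset.inter_subset_left hy.1, hy.2⟩,
      Nb_mono Finset.inter_subset_right hy.1, hy.2⟩
  rw [e3]
  omega

/-- The extension step: a vertex with positive demand can be given a new neighbour while
the condition is preserved. Otherwise each candidate is blocked by a tight set avoiding `s`, and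
the union of these tight sets together with `s` violates the condition. -/
lemma Extendable.step {m : ℕ} {W : Finset V} {f : V → ℤ} (h : Extendable G m W f)
    (hb : Big G m f W.card) {s : V} (hs : 1 ≤ f s) :
    ∃ y, y ∉ W ∧ G.Adj s y ∧ Extendable G m (insert y W) (fun x => f x - if x = s then 1 else 0) := by
  by_contra hcon
  push Not at hcon
  have key : ∀ Y : Finset V, Y ⊆ G.neighborFinset s \ W → ∃ U : Finset V, U.card ≤ 2 * m ∧
      ∑ x ∈ U, f x = ((Nb G U \ W).card : ℤ) ∧ s ∉ U ∧ Y ⊆ Nb G U := by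
    intro Y
    induction Y using Finset.induction_on with
    | empty => intro _; exact ⟨∅, by simp, by simp [Nb], by simp, by simp⟩
    | insert y Y hy ih =>
      intro hY
      obtain ⟨U, u1, u2, u3, u4⟩ := ih ((Finset.subset_insert _ _).trans hY)
      have hyy := hY (Finset.mem_insert_self y Y)
      simp only [Finset.mem_sdiff, mem_neighborFinset] at hyy
      have hne := hcon y hyy.2 hyy.1
      unfold Extendable at hne
      push Not at hne
      obtain ⟨U', v1, v2⟩ := hne
      have v3 := h U' v1
      rw [Finset.sum_sub_distrib, Finset.sum_ite_eq'] at v2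
      have e0 : Nb G U' \ insert y W = (Nb G U' \ W).erase y := by
        ext z; simp only [Finset.mem_sdiff, Finset.mem_insert, Finset.mem_erase]; tauto
      rw [e0] at v2
      have hmem : y ∈ Nb G U' := by
        by_contra hn
        rw [Finset.erase_eq_of_notMem (by simp [hn])] at v2
        split_ifs at v2 <;> omega
      have hmem' : y ∈ Nb G U' \ W := by simp [hmem, hyy.2]
      have hc := Finset.card_erase_add_one hmem'
      have hsU : s ∉ U' := by
        intro hn
        rw [if_pos hn] at v2
        omega
      rw [if_neg hsU] at v2
      obtain ⟨w1, w2⟩ := tight_union h hb u1 v1 u2 (by omega)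
      refine ⟨U ∪ U', w1, w2, by simp [u3, hsU], ?_⟩
      intro z hz
      rcases Finset.mem_insert.1 hz with rfl | hz
      · exact Nb_mono Finset.subset_union_right hmem
      · exact Nb_mono Finset.subset_union_left (u4 hz)
  obtain ⟨U, u1, u2, u3, u4⟩ := key _ (Finset.Subset.refl _)
  have hm : U.card < m := by
    by_contra h3
    have h4 := hb U (by omega) u1
    have h5 := Finset.le_card_sdiff W (Nb G U)
    omega
  have h6 := h (insert s U) (by rw [Finset.card_insert_of_notMem u3]; omega)
  rw [Finset.sum_insert u3] at h6
  have h7 : Nb G (insert s U) \ W ⊆ Nb G U \ W := by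
    intro z hz
    simp only [Finset.mem_sdiff, mem_Nb, Finset.mem_insert] at hz
    obtain ⟨⟨x, hx, hxz⟩, hzW⟩ := hz
    refine Finset.mem_sdiff.2 ⟨?_, hzW⟩
    rcases hx with rfl | hx
    · exact u4 (by simp [hxz, hzW])
    · exact mem_Nb.2 ⟨x, hx, hxz⟩
  have h8 := Finset.card_le_card h7
  omega

/-- The number of children of `x` inside `T`, for the parent map `π`. -/
def dem (π : V → V) (T : Finset V) (x : V) : ℤ := ((T.filter fun y => π y = x).card : ℤ)

lemma dem_nonneg {V : Type} [DecidableEq V] (π : V → V) (T : Finset V) (x : V) :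
    0 ≤ dem π T x := by simp [dem]

/-- Rolling back: discarding used vertices `T \ Z` and returning their demand to their parents
preserves the condition, since every discarded vertex becomes available to its parent again. -/
lemma Extendable.rollback {m : ℕ} {W T Z : Finset V} {f : V → ℤ} {π : V → V}
    (hZ : Z ⊆ T) (hd : Disjoint T W) (hadj : ∀ y ∈ T, G.Adj (π y) y)
    (h : Extendable G m (W ∪ T) (fun x => f x - dem π T x)) :
    Extendable G m (W ∪ Z) (fun x => f x - dem π Z x) := by
  intro U hU
  have h1 := h U hU
  have sumdem : ∀ S : Finset V, ∑ x ∈ U, dem π S x = ((S.filter fun y => π y ∈ U).card : ℤ) := by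
    intro S
    unfold dem
    rw [Finset.card_eq_sum_card_fiberwise (f := π) (t := U)]
    · push_cast
      refine Finset.sum_congr rfl fun x hx => ?_
      congr 2
      ext y; simp only [Finset.mem_filter]; grind
    · intro y hy; simpa using (Finset.mem_filter.1 hy).2
  rw [Finset.sum_sub_distrib, sumdem] at h1 ⊢
  have e1 : (T.filter fun y => π y ∈ U).card = (Z.filter fun y => π y ∈ U).card +
      ((T \ Z).filter fun y => π y ∈ U).card := by
    rw [← Finset.card_union_of_disjoint]
    · congr 1; ext y; simp only [Finset.mem_filter, Finset.mem_union, Finset.mem_sdiff]; grind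
    · rw [Finset.disjoint_left]; intro y; simp only [Finset.mem_filter, Finset.mem_sdiff]; tauto
  have e2 : (Nb G U \ (W ∪ T)).card + ((T \ Z).filter fun y => π y ∈ U).card ≤
      (Nb G U \ (W ∪ Z)).card := by
    rw [← Finset.card_union_of_disjoint]
    · apply Finset.card_le_card
      intro y hy
      simp only [Finset.mem_filter, Finset.mem_union, Finset.mem_sdiff] at hy ⊢
      rcases hy with hy | hy
      · have := @hZ y
        tauto
      · have := Finset.disjoint_left.1 hd hy.1.1
        exact ⟨mem_Nb.2 ⟨_, hy.2, hadj y hy.1.1⟩, by tauto⟩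
    · rw [Finset.disjoint_left]; intro y; simp only [Finset.mem_filter, Finset.mem_sdiff,
        Finset.mem_union]; tauto
  omega

/-! ### Growing and discarding trees -/

/-- `T` is a forest grown from the used set `W`, every `y ∈ T` hanging from its parent `π y`; the
demands left after growing it still satisfy `Extendable`. -/
structure Forest (G : SimpleGraph V) [DecidableRel G.Adj] (m : ℕ) (W : Finset V) (f : V → ℤ)
    (T : Finset V) (π : V → V) : Prop where
  disj : Disjoint T W
  adj : ∀ y ∈ T, G.Adj (π y) y
  par : ∀ y ∈ T, π y ∈ W ∪ T
  ext : Extendable G m (W ∪ T) (fun x => f x - dem π T x)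

lemma Forest.step {m : ℕ} {W T : Finset V} {f : V → ℤ} {π : V → V} (h : Forest G m W f T π)
    (hb : Big G m f (W.card + T.card)) {s : V} (hs : s ∈ W ∪ T) (hd : dem π T s < f s) :
    ∃ y, y ∉ W ∪ T ∧ Forest G m W f (insert y T) (Function.update π y s) := by
  obtain ⟨y, hy, hadj, he⟩ := h.ext.step
    (hb.mono (fun x => by have := dem_nonneg π T x; omega) (Finset.card_union_le _ _))
    (s := s) (by omega)
  have hyT : y ∉ T := fun hn => hy (Finset.mem_union_right _ hn)
  have hyW : y ∉ W := fun hn => hy (Finset.mem_union_left _ hn)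
  refine ⟨y, hy, ⟨?_, ?_, ?_, ?_⟩⟩
  · rw [Finset.disjoint_insert_left]; exact ⟨hyW, h.disj⟩
  · intro z hz
    rcases Finset.mem_insert.1 hz with rfl | hzT
    · simpa using hadj
    · rw [Function.update_of_ne (by rintro rfl; exact hyT hzT)]; exact h.adj z hzT
  · intro z hz
    rcases Finset.mem_insert.1 hz with rfl | hzT
    · rw [Function.update_self]
      rcases Finset.mem_union.1 hs with h1 | h1 <;> simp [h1]
    · rw [Function.update_of_ne (by rintro rfl; exact hyT hzT)]
      rcases Finset.mem_union.1 (h.par z hzT) with h1 | h1 <;> simp [h1]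
  · rw [Finset.union_insert]
    refine he.mono fun x => ?_
    have : dem (Function.update π y s) (insert y T) x = dem π T x + if x = s then 1 else 0 := by
      unfold dem
      have e : T.filter (fun z => Function.update π y s z = x) = T.filter (fun z => π z = x) := by
        apply Finset.filter_congr
        intro z hz
        rw [Function.update_of_ne (by rintro rfl; exact hyT hz)]
      rw [Finset.filter_insert, e, Function.update_self]
      by_cases hx : s = x
      · subst hx
        rw [if_pos rfl, if_pos rfl, Finset.card_insert_of_notMem (by simp [hyT])]
        push_cast; ring
      · rw [if_neg hx, if_neg (Ne.symm hx)]; simp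
    rw [this]; omega

/-- A layer `X` of childless vertices with demand at least three can be given any number
`c ≤ 3|X|` of new children. -/
lemma Forest.layer {m : ℕ} {W T : Finset V} {f : V → ℤ} {π : V → V} (h : Forest G m W f T π)
    {X : Finset V} (hX : X ⊆ W ∪ T) (hch : ∀ x ∈ X, ∀ y ∈ T, π y ≠ x)
    (hf : ∀ x ∈ X, 3 ≤ f x) (c : ℕ) (hc : c ≤ 3 * X.card)
    (hb : Big G m f (W.card + T.card + c)) :
    ∃ (Y : Finset V) (π' : V → V), Y.card = c ∧ Disjoint Y (W ∪ T) ∧ (∀ z, z ∉ Y → π' z = π z) ∧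
      (∀ y ∈ Y, π' y ∈ X) ∧ Forest G m W f (T ∪ Y) π' := by
  induction c with
  | zero => exact ⟨∅, π, by simp, by simp, by simp, by simp, by simpa using h⟩
  | succ c ih =>
    obtain ⟨Y, π', y1, y2, y3, y4, y5⟩ := ih (by omega) (hb.mono (fun _ => le_rfl) (by omega))
    -- fewer than `3|X|` children have been distributed, so some `x ∈ X` has at most two
    have hx : ∃ x ∈ X, (Y.filter fun y => π' y = x).card < 3 := by
      by_contra hcon
      push Not at hcon
      have h1 := Finset.card_eq_sum_card_fiberwise (f := π') (s := Y) (t := X)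
        (fun y hy => y4 y hy)
      have h2 := Finset.card_nsmul_le_sum X _ 3 hcon
      simp only [smul_eq_mul] at h2
      omega
    obtain ⟨x, hxX, hx3⟩ := hx
    have hdem : dem π' (T ∪ Y) x = ((Y.filter fun y => π' y = x).card : ℤ) := by
      unfold dem
      congr 2
      ext z
      simp only [Finset.mem_filter, Finset.mem_union]
      constructor
      · rintro ⟨hz | hz, hzx⟩
        · by_cases hzY : z ∈ Y
          · exact ⟨hzY, hzx⟩
          · rw [y3 z hzY] at hzx
            exact absurd hzx (hch x hxX z hz)
        · exact ⟨hz, hzx⟩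
      · rintro ⟨hz, hzx⟩; exact ⟨Or.inr hz, hzx⟩
    have hTY := Finset.card_union_le T Y
    obtain ⟨y, hy, hF⟩ := y5.step (hb.mono (fun _ => le_rfl) (by omega)) (s := x)
      (by rcases Finset.mem_union.1 (hX hxX) with h1 | h1 <;> simp [h1])
      (by rw [hdem]; have := hf x hxX; omega)
    have hyY : y ∉ Y := fun hn => hy (by simp [hn])
    have hyWT : y ∉ W ∪ T := fun hn => hy (by
      rcases Finset.mem_union.1 hn with h1 | h1 <;> simp [h1])
    refine ⟨insert y Y, Function.update π' y x, ?_, ?_, ?_, ?_, ?_⟩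
    · rw [Finset.card_insert_of_notMem hyY, y1]
    · rw [Finset.disjoint_insert_left]; exact ⟨hyWT, y2⟩
    · intro z hz
      rw [Finset.mem_insert, not_or] at hz
      rw [Function.update_of_ne hz.1, y3 z hz.2]
    · intro z hz
      rcases Finset.mem_insert.1 hz with rfl | hzY
      · rw [Function.update_self]; exact hxX
      · rw [Function.update_of_ne (by rintro rfl; exact hyY hzY)]; exact y4 z hzY
    · rw [Finset.union_insert]; exact hF

/-- A tree with prescribed layer sizes `c 0 = 1, c 1, …, c p` can be grown from a root `r`. For each
vertex `x` of the last layer the tree path from `r` to `x` has length `p`, and all its vertices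
other than `r` have their parents on that path. -/
lemma exists_tree {m : ℕ} {W : Finset V} {f : V → ℤ} (h : Extendable G m W f) {r : V} (hr : r ∈ W)
    (hfr : 3 ≤ f r) (hf : ∀ x, x ∉ W → 3 ≤ f x) (c : ℕ → ℕ) (c0 : c 0 = 1)
    (hc : ∀ j, c (j + 1) ≤ 3 * c j) (p : ℕ)
    (hb : Big G m f (W.card + ∑ j ∈ Finset.range p, c (j + 1))) :
    ∃ (T : Finset V) (π : V → V) (X : Finset V), Forest G m W f T π ∧
      T.card = ∑ j ∈ Finset.range p, c (j + 1) ∧ X ⊆ insert r T ∧ X.card = c p ∧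
      (∀ x ∈ X, ∀ y ∈ T, π y ≠ x) ∧ (∀ y ∈ T, π y ∈ insert r T) ∧
      ∀ x ∈ X, ∃ w : G.Walk r x, w.IsPath ∧ w.length = p ∧
        ∀ z ∈ w.support, z = r ∨ (z ∈ T ∧ π z ∈ w.support) := by
  induction p with
  | zero =>
    refine ⟨∅, id, {r}, ⟨by simp, by simp, by simp, ?_⟩, by simp, by simp, by simp [c0], by simp,
      by simp, ?_⟩
    · simpa [dem] using h
    · intro x hx
      rw [Finset.mem_singleton] at hx
      subst hx
      exact ⟨Walk.nil, by simp, by simp, by simp⟩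
  | succ p ih =>
    rw [Finset.sum_range_succ] at hb
    obtain ⟨T, π, X, F, t1, t2, t3, t4, t6, t5⟩ := ih (hb.mono (fun _ => le_rfl) (by omega))
    have hXr : X ⊆ W ∪ T := by
      intro x hx
      rcases Finset.mem_insert.1 (t2 hx) with rfl | h1
      · simp [hr]
      · simp [h1]
    obtain ⟨Y, π', y1, y2, y3, y4, y5⟩ := F.layer hXr t4 (by
        intro x hx
        rcases Finset.mem_insert.1 (t2 hx) with rfl | h1
        · exact hfr
        · exact hf x (Finset.disjoint_left.1 F.disj h1)) (c (p + 1))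
      (by rw [t3]; exact hc p) (hb.mono (fun _ => le_rfl) (by omega))
    have hYT : Disjoint T Y := (Finset.disjoint_of_subset_right Finset.subset_union_right y2).symm
    have hYn : ∀ z ∈ W ∪ T, z ∉ Y := fun z hz hzY => Finset.disjoint_left.1 y2 hzY hz
    refine ⟨T ∪ Y, π', Y, y5, ?_, ?_, y1, ?_, ?_, ?_⟩
    · rw [Finset.card_union_of_disjoint hYT, t1, y1, Finset.sum_range_succ]
    · intro y hy; simp [hy]
    · intro x hx y hy hyx
      by_cases hyY : y ∈ Y
      · exact hYn _ (hXr (y4 y hyY)) (hyx ▸ hx)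
      · rw [y3 y hyY] at hyx
        rcases Finset.mem_union.1 hy with h1 | h1
        · exact hYn _ (F.par y h1) (hyx ▸ hx)
        · exact hyY h1
    · intro y hy
      have hsub : insert r T ⊆ insert r (T ∪ Y) :=
        Finset.insert_subset_insert _ Finset.subset_union_left
      by_cases hyY : y ∈ Y
      · exact hsub (t2 (y4 y hyY))
      · rw [y3 y hyY]
        exact hsub (t6 y ((Finset.mem_union.1 hy).resolve_right hyY))
    · intro y hy
      obtain ⟨w, w1, w2, w3⟩ := t5 _ (y4 y hy)
      have hsupp : ∀ z ∈ w.support, z ∈ W ∪ T := by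
        intro z hz
        rcases w3 z hz with rfl | h1
        · simp [hr]
        · simp [h1.1]
      refine ⟨w.concat (y5.adj y (by simp [hy])), ?_, by simp [w2], ?_⟩
      · exact w1.concat (fun hn => hYn _ (hsupp y hn) hy) _
      · intro z hz
        rw [Walk.support_concat, List.mem_append, List.mem_singleton] at hz
        simp only [Walk.support_concat, List.mem_append]
        rcases hz with hz | rfl
        · rcases w3 z hz with h1 | h1
          · exact Or.inl h1
          · right
            refine ⟨by simp [h1.1], Or.inl ?_⟩
            rw [y3 z (hYn z (by simp [h1.1]))]; exact h1.2
        · exact Or.inr ⟨by simp [hy], Or.inl (Walk.end_mem_support w)⟩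

/-- Layer sizes for a tree of depth `p` with at least `M + 1` leaves when `M < 3 ^ p`: a path at
first, then geometric growth, so that the whole tree has `O(M + p)` vertices. -/
def layerSize (M p j : ℕ) : ℕ := M / 3 ^ (p - j) + 1

lemma layerSize_zero {M p : ℕ} (h : M < 3 ^ p) : layerSize M p 0 = 1 := by
  simp [layerSize, Nat.div_eq_of_lt h]

lemma layerSize_self (M p : ℕ) : layerSize M p p = M + 1 := by simp [layerSize]

lemma layerSize_succ (M p j : ℕ) : layerSize M p (j + 1) ≤ 3 * layerSize M p j := by
  unfold layerSize
  rcases Nat.lt_or_ge j p with h | h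
  · have e : p - j = (p - (j + 1)) + 1 := by omega
    rw [e, pow_succ, ← Nat.div_div_eq_div_mul]
    omega
  · rw [Nat.sub_eq_zero_of_le h, Nat.sub_eq_zero_of_le (by omega)]
    simp

lemma sum_layerSize_le (M p : ℕ) :
    ∑ j ∈ Finset.range p, layerSize M p (j + 1) ≤ 2 * M + p := by
  have h1 : ∑ j ∈ Finset.range p, layerSize M p (j + 1) =
      ∑ j ∈ Finset.range p, (M / 3 ^ j + 1) := by
    rw [← Finset.sum_range_reflect]
    refine Finset.sum_congr rfl fun j hj => ?_
    have := Finset.mem_range.1 hj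
    unfold layerSize
    congr 3
    omega
  have h2 := Nat.geom_sum_le (b := 3) (by norm_num) M p
  rw [h1, Finset.sum_add_distrib]
  simp only [Finset.sum_const, Finset.card_range, smul_eq_mul, mul_one]
  omega

lemma isPath_append {V : Type} {G : SimpleGraph V} {a b c : V} {w₁ : G.Walk a b} {w₂ : G.Walk b c} (h₁ : w₁.IsPath)
    (h₂ : w₂.IsPath) (hd : ∀ z ∈ w₁.support, z ∈ w₂.support → z = b) :
    (w₁.append w₂).IsPath := by
  rw [Walk.isPath_def, Walk.support_append, List.nodup_append]
  have h2 := (Walk.isPath_def _).1 h₂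
  rw [← Walk.cons_tail_support] at h2
  rw [List.nodup_cons] at h2
  refine ⟨(Walk.isPath_def _).1 h₁, h2.2, ?_⟩
  intro x hx y hy hxy
  subst hxy
  have := hd x hx (List.mem_of_mem_tail hy)
  subst this
  exact h2.1 hy

/-- Two used vertices with positive remaining demand can be joined by a path of length exactly
`p + q + 3` through unused vertices, preserving the condition. Trees of depth `p` and `q` are grown
from new neighbours of `a` and `b`; an edge joins their last layers, and everything off the
resulting path is rolled back. -/
lemma connect {M p q : ℕ} {W : Finset V} {f : V → ℤ} (h : Extendable G (M + 1) W f) {a b : V}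
    (ha : a ∈ W) (hb : b ∈ W) (hab : a ≠ b) (fa : 1 ≤ f a) (fb : 1 ≤ f b)
    (hf : ∀ x, x ∉ W → 3 ≤ f x) (hp : M < 3 ^ p) (hq : M < 3 ^ q)
    (hbig : Big G (M + 1) f (W.card + 2 + (2 * M + p) + (2 * M + q)))
    (hjoin : ∀ A B : Finset V, A.card = M + 1 → B.card = M + 1 → ∃ x ∈ A, ∃ y ∈ B, G.Adj x y) :
    ∃ (I : Finset V) (f' : V → ℤ) (w : G.Walk a b), Disjoint I W ∧ I.card + 1 ≤ w.length ∧
      w.IsPath ∧ w.length = p + q + 3 ∧ (∀ v ∈ w.support, v = a ∨ v = b ∨ v ∈ I) ∧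
      Extendable G (M + 1) (W ∪ I) f' ∧ (∀ x, f' x ≤ f x) ∧
      ∀ x, x ∉ I → f' x = f x - (if x = a then 1 else 0) - (if x = b then 1 else 0) := by
  obtain ⟨a', ha', haa', E1⟩ := h.step (hbig.mono (fun _ => le_rfl) (by omega)) fa
  have ha'a : a' ≠ a := by rintro rfl; exact ha' ha
  have ha'b : a' ≠ b := by rintro rfl; exact ha' hb
  obtain ⟨b', hb', hbb', E2⟩ := E1.step
    (hbig.mono (fun x => by split_ifs <;> omega)
      (by rw [Finset.card_insert_of_notMem ha']; omega)) (s := b) (by rw [if_neg hab.symm]; omega)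
  rw [Finset.mem_insert, not_or] at hb'
  obtain ⟨hb'a', hb'W⟩ := hb'
  have hb'a : b' ≠ a := by rintro rfl; exact hb'W ha
  have hb'b : b' ≠ b := by rintro rfl; exact hb'W hb
  set f2 : V → ℤ := fun x => (f x - if x = a then 1 else 0) - if x = b then 1 else 0 with hf2
  set W2 : Finset V := insert b' (insert a' W) with hW2
  have f2le : ∀ x, f2 x ≤ f x := by intro x; simp only [hf2]; split_ifs <;> omega
  have W2card : W2.card = W.card + 2 := by
    rw [hW2, Finset.card_insert_of_notMem (by simp [hb'a', hb'W]), Finset.card_insert_of_notMem ha']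
  have f2W : ∀ x, x ∉ W → 3 ≤ f2 x := by
    intro x hx
    have h1 : x ≠ a := by rintro rfl; exact hx ha
    have h2 : x ≠ b := by rintro rfl; exact hx hb
    simp only [hf2, if_neg h1, if_neg h2, sub_zero]
    exact hf x hx
  have W2sub : ∀ x, x ∉ W2 → x ∉ W := by
    intro x hx hn; exact hx (by simp [hW2, hn])
  have s1 := sum_layerSize_le M p
  have s2 := sum_layerSize_le M q
  obtain ⟨T1, π1, X1, F1, t1, t2, t3, -, t5, t6⟩ := exists_tree (r := a') E2 (by simp [hW2])
    (f2W a' ha') (fun x hx => f2W x (W2sub x hx)) (layerSize M p) (layerSize_zero hp)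
    (layerSize_succ M p) p (hbig.mono f2le (by omega))
  rw [layerSize_self] at t3
  have b'T1 : b' ∉ T1 := fun hn => Finset.disjoint_left.1 F1.disj hn (by simp [hW2])
  have dem0 : ∀ x, x ≠ a' → x ∉ T1 → dem π1 T1 x = 0 := by
    intro x h1 h2
    unfold dem
    rw [Finset.filter_eq_empty_iff.2]
    · simp
    · intro y hy hyx
      have := t5 y hy
      rw [hyx, Finset.mem_insert] at this
      tauto
  obtain ⟨T2, π2, X2, F2, u1, u2, u3, -, u5, u6⟩ := exists_tree (r := b') F1.ext (by simp [hW2])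
    (by rw [dem0 b' hb'a' b'T1, sub_zero]; exact f2W b' hb'W)
    (fun x hx => by
      rw [Finset.mem_union, not_or] at hx
      have : x ≠ a' := by rintro rfl; exact hx.1 (by simp [hW2])
      rw [dem0 x this hx.2, sub_zero]
      exact f2W x (W2sub x hx.1)) (layerSize M q) (layerSize_zero hq)
    (layerSize_succ M q) q
    (hbig.mono (fun x => by have := dem_nonneg π1 T1 x; have := f2le x; omega) (by
      have := Finset.card_union_le W2 T1
      omega))
  rw [layerSize_self] at u3
  obtain ⟨x1, hx1, x2, hx2, hadj⟩ := hjoin X1 X2 t3 u3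
  obtain ⟨w1, w1p, w1l, w1s⟩ := t6 x1 hx1
  obtain ⟨w2, w2p, w2l, w2s⟩ := u6 x2 hx2
  set Z1 := T1.filter (· ∈ w1.support) with hZ1
  set Z2 := T2.filter (· ∈ w2.support) with hZ2
  have dW1 : ∀ z ∈ T1, z ∉ W2 := fun z hz => Finset.disjoint_left.1 F1.disj hz
  have dW2 : ∀ z ∈ T2, z ∉ W2 ∪ T1 := fun z hz => Finset.disjoint_left.1 F2.disj hz
  have a'W2 : a' ∈ W2 := by simp [hW2]
  have b'W2 : b' ∈ W2 := by simp [hW2]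
  have WW2 : ∀ z ∈ W, z ∈ W2 := by intro z hz; simp [hW2, hz]
  have R2 : Extendable G (M + 1) ((W2 ∪ T1) ∪ Z2)
      (fun x => (f2 x - dem π1 T1 x) - dem π2 Z2 x) :=
    Extendable.rollback (Finset.filter_subset (· ∈ w2.support) T2) F2.disj F2.adj F2.ext
  have R1 : Extendable G (M + 1) ((W2 ∪ Z2) ∪ Z1) (fun x => (f2 x - dem π2 Z2 x) - dem π1 Z1 x) := by
    refine Extendable.rollback (T := T1) (Finset.filter_subset (· ∈ w1.support) T1) ?_ F1.adj ?_
    · rw [Finset.disjoint_left]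
      intro z hz hz2
      rcases Finset.mem_union.1 hz2 with h1 | h1
      · exact dW1 z hz h1
      · exact dW2 z (Finset.mem_filter.1 h1).1 (by simp [hz])
    · rw [Finset.union_right_comm]
      exact R2.mono fun x => by omega
  have demZ1 : ∀ x, x ≠ a' → x ∉ Z1 → dem π1 Z1 x = 0 := by
    intro x h1 h2
    unfold dem
    rw [Finset.filter_eq_empty_iff.2]
    · simp
    · intro y hy hyx
      obtain ⟨hy1, hy2⟩ := Finset.mem_filter.1 hy
      rcases w1s y hy2 with rfl | h3
      · exact dW1 _ hy1 a'W2
      · rw [hyx] at h3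
        rcases w1s x h3.2 with h4 | h4
        · exact h1 h4
        · exact h2 (Finset.mem_filter.2 ⟨h4.1, h3.2⟩)
  have demZ2 : ∀ x, x ≠ b' → x ∉ Z2 → dem π2 Z2 x = 0 := by
    intro x h1 h2
    unfold dem
    rw [Finset.filter_eq_empty_iff.2]
    · simp
    · intro y hy hyx
      obtain ⟨hy1, hy2⟩ := Finset.mem_filter.1 hy
      rcases w2s y hy2 with rfl | h3
      · exact dW2 _ hy1 (by simp [b'W2])
      · rw [hyx] at h3
        rcases w2s x h3.2 with h4 | h4
        · exact h1 h4
        · exact h2 (Finset.mem_filter.2 ⟨h4.1, h3.2⟩)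
  have sup1 : ∀ z ∈ w1.support, z = a' ∨ z ∈ Z1 := by
    intro z hz
    rcases w1s z hz with h1 | h1
    · exact Or.inl h1
    · exact Or.inr (Finset.mem_filter.2 ⟨h1.1, hz⟩)
  have sup2 : ∀ z ∈ w2.support, z = b' ∨ z ∈ Z2 := by
    intro z hz
    rcases w2s z hz with h1 | h1
    · exact Or.inl h1
    · exact Or.inr (Finset.mem_filter.2 ⟨h1.1, hz⟩)
  have sup1W : ∀ z ∈ w1.support, z ∉ W := by
    intro z hz hzW
    rcases w1s z hz with rfl | h1
    · exact ha' hzW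
    · exact dW1 z h1.1 (WW2 z hzW)
  have sup2W : ∀ z ∈ w2.support, z ∉ W := by
    intro z hz hzW
    rcases w2s z hz with rfl | h1
    · exact hb'W hzW
    · exact dW2 z h1.1 (by simp [WW2 z hzW])
  have sup12 : ∀ z ∈ w1.support, z ∉ w2.support := by
    intro z hz hz2
    rcases w1s z hz with rfl | h1 <;> rcases w2s z hz2 with h2 | h2
    · exact hb'a' h2.symm
    · exact dW2 _ h2.1 (by simp [a'W2])
    · subst h2; exact b'T1 h1.1
    · exact dW2 z h2.1 (by simp [h1.1])
  let I : Finset V := (w1.support ++ w2.support).toFinset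
  have memI : ∀ z, z ∈ I ↔ z ∈ w1.support ∨ z ∈ w2.support := by intro z; simp [I]
  have a'I : a' ∈ I := (memI _).2 (Or.inl w1.start_mem_support)
  have b'I : b' ∈ I := (memI _).2 (Or.inr w2.start_mem_support)
  have Z1I : ∀ z ∈ Z1, z ∈ I := fun z hz => (memI _).2 (Or.inl (Finset.mem_filter.1 hz).2)
  have Z2I : ∀ z ∈ Z2, z ∈ I := fun z hz => (memI _).2 (Or.inr (Finset.mem_filter.1 hz).2)
  have hset : W ∪ I = (W2 ∪ Z2) ∪ Z1 := by
    apply Finset.Subset.antisymm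
    · refine Finset.union_subset (fun z hz => ?_) fun z hz => ?_
      · exact Finset.mem_union_left _ (Finset.mem_union_left _ (WW2 z hz))
      · rcases (memI z).1 hz with h1 | h1
        · rcases sup1 z h1 with rfl | h2
          · exact Finset.mem_union_left _ (Finset.mem_union_left _ a'W2)
          · exact Finset.mem_union_right _ h2
        · rcases sup2 z h1 with rfl | h2
          · exact Finset.mem_union_left _ (Finset.mem_union_left _ b'W2)
          · exact Finset.mem_union_left _ (Finset.mem_union_right _ h2)
    · refine Finset.union_subset (Finset.union_subset ?_ fun z hz => ?_) fun z hz => ?_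
      · exact Finset.insert_subset (Finset.mem_union_right _ b'I)
          (Finset.insert_subset (Finset.mem_union_right _ a'I) Finset.subset_union_left)
      · exact Finset.mem_union_right _ (Z2I z hz)
      · exact Finset.mem_union_right _ (Z1I z hz)
  let v2 : G.Walk x2 b := w2.reverse.concat hbb'.symm
  have v2p : v2.IsPath := w2p.reverse.concat
    (by rw [Walk.support_reverse, List.mem_reverse]; exact fun hn => sup2W b hn hb) _
  have v2s : ∀ z ∈ v2.support, z ∈ w2.support ∨ z = b := by
    intro z hz
    simpa [v2, Walk.support_concat] using hz
  let v1 : G.Walk a x1 := Walk.cons haa' w1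
  have v1p : v1.IsPath := (Walk.cons_isPath_iff _ _).2 ⟨w1p, fun hn => sup1W a hn ha⟩
  have v1s : ∀ z ∈ v1.support, z = a ∨ z ∈ w1.support := by
    intro z hz
    simpa [v1] using hz
  have v12 : ∀ z ∈ v1.support, z ∉ v2.support := by
    intro z hz hz2
    rcases v1s z hz with rfl | h1 <;> rcases v2s z hz2 with h2 | h2
    · exact sup2W _ h2 ha
    · exact hab h2
    · exact sup12 z h1 h2
    · subst h2; exact sup1W _ h1 hb
  let v3 : G.Walk x1 b := Walk.cons hadj v2
  have v3p : v3.IsPath := (Walk.cons_isPath_iff _ _).2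
    ⟨v2p, v12 x1 v1.end_mem_support⟩
  refine ⟨I, fun x => (f2 x - dem π2 Z2 x) - dem π1 Z1 x, v1.append v3, ?_, ?_, ?_, ?_, ?_, ?_, ?_, ?_⟩
  · rw [Finset.disjoint_left]
    intro z hz
    rcases (memI z).1 hz with h1 | h1
    · exact sup1W z h1
    · exact sup2W z h1
  · have := List.toFinset_card_le (w1.support ++ w2.support)
    simp only [List.length_append, Walk.length_support] at this
    simp only [Walk.length_append, v1, v3, v2, Walk.length_cons, Walk.length_concat,
      Walk.length_reverse]
    simp only [I]
    omega
  · refine isPath_append v1p v3p fun z hz hz3 => ?_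
    simp only [v3, Walk.support_cons, List.mem_cons] at hz3
    exact hz3.resolve_right (v12 z hz)
  · simp only [Walk.length_append, v1, v3, v2, Walk.length_cons, Walk.length_concat,
      Walk.length_reverse, w1l, w2l]
    omega
  · intro z hz
    rw [Walk.mem_support_append_iff] at hz
    rw [memI]
    rcases hz with hz | hz
    · rcases v1s z hz with h1 | h1 <;> simp [h1]
    · simp only [v3, Walk.support_cons, List.mem_cons] at hz
      rcases hz with rfl | hz
      · simp
      · rcases v2s z hz with h1 | h1 <;> simp [h1]
  · rw [hset]; exact R1
  · intro x
    have := dem_nonneg π1 Z1 x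
    have := dem_nonneg π2 Z2 x
    have := f2le x
    simp only
    omega
  · intro x hx
    have h1 : x ≠ a' := by rintro rfl; exact hx a'I
    have h2 : x ≠ b' := by rintro rfl; exact hx b'I
    simp only
    rw [demZ1 x h1 (fun hn => hx (Z1I x hn)), demZ2 x h2 (fun hn => hx (Z2I x hn))]
    simp [hf2]

/-! ### Linking all pairs of branch vertices -/

/-- If the branch vertices `φ i` satisfy the condition with demand at least `t` at each of them, all
pairs can be linked one after another: a branch vertex always has as much remaining demand as
it has pairs still waiting. -/
lemma embed {M p q t : ℕ} (φ : Fin t → V) (hφ : Function.Injective φ) {f₀ : V → ℤ}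
    (h : Extendable G (M + 1) (Finset.univ.image φ) f₀) (hft : ∀ i, (t : ℤ) ≤ f₀ (φ i))
    (hf3 : ∀ x, x ∉ Finset.univ.image φ → 3 ≤ f₀ x) (hp : M < 3 ^ p) (hq : M < 3 ^ q)
    (hbig : Big G (M + 1) f₀ (t + t ^ 2 * (p + q + 3) + 2 + (2 * M + p) + (2 * M + q)))
    (hjoin : ∀ A B : Finset V, A.card = M + 1 → B.card = M + 1 → ∃ x ∈ A, ∃ y ∈ B, G.Adj x y) :
    HasBalancedCliqueSubdivision G t (p + q + 2) := by
  set W₀ := Finset.univ.image φ with hW₀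
  have φW : ∀ i, φ i ∈ W₀ := fun i => by simp [hW₀]
  let P : Finset (Fin t × Fin t) := Finset.univ.filter fun e => e.1 < e.2
  let pend : Fin t → Finset (Fin t × Fin t) → Finset (Fin t × Fin t) := fun i Q =>
    (P \ Q).filter fun e => e.1 = i ∨ e.2 = i
  have hP : P.card ≤ t ^ 2 := by
    refine (Finset.card_le_univ P).trans ?_
    simp [sq]
  -- a pair containing `i` is determined by its other element
  have pend0 : ∀ i, (pend i ∅).card ≤ t := by
    intro i
    have := Finset.card_le_card_of_injOn (s := pend i ∅) (t := (Finset.univ : Finset (Fin t)))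
      (fun e => if e.1 = i then e.2 else e.1) (by simp) (by
        rintro ⟨a, b⟩ h1 ⟨c, e⟩ h2 h3
        simp [pend, P] at h1 h2 h3
        obtain ⟨h1, h1'⟩ := h1
        obtain ⟨h2, h2'⟩ := h2
        simp only [Prod.mk.injEq]
        split_ifs at h3 with k1 k2 k2
        · exact ⟨k1.trans k2.symm, h3⟩
        · have k3 := h2'.resolve_left k2
          omega
        · have k3 := h1'.resolve_left k1
          omega
        · exact ⟨h3, (h1'.resolve_left k1).trans (h2'.resolve_left k2).symm⟩)
    simpa using this
  have main : ∀ Q : Finset (Fin t × Fin t), Q ⊆ P → ∃ (W : Finset V) (f : V → ℤ)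
      (I : Fin t × Fin t → Finset V), W₀ ⊆ W ∧ W.card ≤ t + Q.card * (p + q + 3) ∧
      Extendable G (M + 1) W f ∧ (∀ x, f x ≤ f₀ x) ∧ (∀ x, x ∉ W → f₀ x ≤ f x) ∧
      (∀ i, ((pend i Q).card : ℤ) ≤ f (φ i)) ∧ (∀ e ∈ Q, I e ⊆ W ∧ Disjoint (I e) W₀) ∧
      (∀ e ∈ Q, ∀ e' ∈ Q, e ≠ e' → Disjoint (I e) (I e')) ∧
      ∀ e ∈ Q, ∃ w : G.Walk (φ e.1) (φ e.2), w.IsPath ∧ w.length = p + q + 3 ∧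
        ∀ v ∈ w.support, v = φ e.1 ∨ v = φ e.2 ∨ v ∈ I e := by
    intro Q
    induction Q using Finset.induction_on with
    | empty =>
      intro _
      refine ⟨W₀, f₀, fun _ => ∅, Finset.Subset.refl _, ?_, h, fun _ => le_rfl, fun _ _ => le_rfl,
        fun i => ?_, by simp, by simp, by simp⟩
      · have := Finset.card_image_le (s := (Finset.univ : Finset (Fin t))) (f := φ)
        simpa using this
      · have := pend0 i
        have := hft i
        omega
    | insert e Q he ih =>
      intro hQ
      obtain ⟨W, f, I, a1, a2, a3, a4, a5, a6, a7, a8, a9⟩ :=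
        ih ((Finset.subset_insert _ _).trans hQ)
      have heP := hQ (Finset.mem_insert_self e Q)
      have hlt : e.1 < e.2 := (Finset.mem_filter.1 heP).2
      have hQc : Q.card + 1 ≤ t ^ 2 := by
        rw [← Finset.card_insert_of_notMem he]
        exact (Finset.card_le_card hQ).trans hP
      have hmul : (Q.card + 1) * (p + q + 3) ≤ t ^ 2 * (p + q + 3) :=
        Nat.mul_le_mul_right _ hQc
      rw [add_mul] at hmul
      have hpe : ∀ i, e.1 = i ∨ e.2 = i → (pend i (insert e Q)).card + 1 = (pend i Q).card := by
        intro i hi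
        have h1 : pend i (insert e Q) = (pend i Q).erase e := by
          ext z
          simp only [pend, Finset.mem_filter, Finset.mem_sdiff, Finset.mem_insert, Finset.mem_erase]
          tauto
        rw [h1, Finset.card_erase_add_one]
        simp only [pend, Finset.mem_filter, Finset.mem_sdiff]
        exact ⟨⟨heP, he⟩, hi⟩
      have hpm : ∀ i, (pend i (insert e Q)).card ≤ (pend i Q).card := fun i =>
        Finset.card_le_card (Finset.filter_subset_filter _
          (Finset.sdiff_subset_sdiff (Finset.Subset.refl _) (Finset.subset_insert _ _)))
      have k1 := hpe e.1 (Or.inl rfl)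
      have k2 := hpe e.2 (Or.inr rfl)
      have k3 := a6 e.1
      have k4 := a6 e.2
      obtain ⟨J, f', w, b1, b2, b3, b4, b5, b6, b7, b8⟩ := connect a3 (a1 (φW e.1)) (a1 (φW e.2))
        (fun hn => hlt.ne (hφ hn)) (by omega) (by omega)
        (fun x hx => (hf3 x fun hn => hx (a1 hn)).trans (a5 x hx)) hp hq
        (hbig.mono a4 (by omega)) hjoin
      have hJW : ∀ z ∈ J, z ∉ W := fun z hz => Finset.disjoint_left.1 b1 hz
      have hne : ∀ e' ∈ Q, e' ≠ e := by rintro e' h1 rfl; exact he h1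
      have hIJ : ∀ e' ∈ Q, Disjoint (I e') J := fun e' h1 =>
        (b1.mono_right (a7 e' h1).1).symm
      refine ⟨W ∪ J, f', Function.update I e J, a1.trans Finset.subset_union_left, ?_, b6,
        fun x => (b7 x).trans (a4 x), ?_, ?_, ?_, ?_, ?_⟩
      · have := Finset.card_union_le W J
        rw [Finset.card_insert_of_notMem he, add_mul]
        omega
      · intro x hx
        rw [Finset.mem_union, not_or] at hx
        have h1 : x ≠ φ e.1 := by rintro rfl; exact hx.1 (a1 (φW _))
        have h2 : x ≠ φ e.2 := by rintro rfl; exact hx.1 (a1 (φW _))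
        rw [b8 x hx.2, if_neg h1, if_neg h2]
        have := a5 x hx.1
        omega
      · intro i
        rw [b8 (φ i) (fun hn => hJW _ hn (a1 (φW i)))]
        have h0 := a6 i
        have h1 := hpm i
        by_cases c1 : i = e.1
        · subst c1
          rw [if_pos rfl, if_neg fun hn => hlt.ne (hφ hn)]
          omega
        · rw [if_neg fun hn => c1 (hφ hn)]
          by_cases c2 : i = e.2
          · subst c2
            rw [if_pos rfl]
            omega
          · rw [if_neg fun hn => c2 (hφ hn)]
            omega
      · intro e' he'
        rcases Finset.mem_insert.1 he' with rfl | h1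
        · rw [Function.update_self]
          exact ⟨Finset.subset_union_right, b1.mono_right a1⟩
        · rw [Function.update_of_ne (hne e' h1)]
          exact ⟨(a7 e' h1).1.trans Finset.subset_union_left, (a7 e' h1).2⟩
      · intro e₁ m1 e₂ m2 h12
        rcases Finset.mem_insert.1 m1 with rfl | h1 <;> rcases Finset.mem_insert.1 m2 with rfl | h2
        · exact absurd rfl h12
        · rw [Function.update_self, Function.update_of_ne (hne e₂ h2)]
          exact (hIJ e₂ h2).symm
        · rw [Function.update_self, Function.update_of_ne (hne e₁ h1)]
          exact hIJ e₁ h1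
        · rw [Function.update_of_ne (hne e₁ h1), Function.update_of_ne (hne e₂ h2)]
          exact a8 e₁ h1 e₂ h2 h12
      · intro e' he'
        rcases Finset.mem_insert.1 he' with rfl | h1
        · rw [Function.update_self]
          exact ⟨w, b3, b4, b5⟩
        · rw [Function.update_of_ne (hne e' h1)]
          exact a9 e' h1
  obtain ⟨W, f, I, -, -, -, -, -, -, a7, a8, a9⟩ := main P (Finset.Subset.refl _)
  choose w w1 w2 w3 using a9
  have hmem : ∀ {i j : Fin t}, i < j → (i, j) ∈ P := fun h => by simp [P, h]
  have hnot : ∀ {i j : Fin t} (h : i < j) (k : Fin t), φ k ∉ I (i, j) := fun h k hn =>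
    Finset.disjoint_left.1 (a7 _ (hmem h)).2 hn (φW k)
  refine ⟨φ, hφ, fun i j h => w (i, j) (hmem h), ?_, ?_, ?_⟩
  · exact fun i j h => ⟨w1 _ (hmem h), w2 _ (hmem h)⟩
  · intro i j h k hk
    rcases w3 _ (hmem h) _ hk with h1 | h1 | h1
    · exact Or.inl (hφ h1)
    · exact Or.inr (hφ h1)
    · exact absurd h1 (hnot h k)
  · intro i j h i' j' h' hne v hv hv'
    rcases w3 _ (hmem h) _ hv with h1 | h1 | h1 <;>
      rcases w3 _ (hmem h') _ hv' with h2 | h2 | h2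
    · exact ⟨Or.inl h1, Or.inl h2⟩
    · exact ⟨Or.inl h1, Or.inr h2⟩
    · subst h1; exact absurd h2 (hnot h' _)
    · exact ⟨Or.inr h1, Or.inl h2⟩
    · exact ⟨Or.inr h1, Or.inr h2⟩
    · subst h1; exact absurd h2 (hnot h' _)
    · subst h2; exact absurd h1 (hnot h _)
    · subst h2; exact absurd h1 (hnot h _)
    · exact absurd h2 (Finset.disjoint_left.1 (a8 _ (hmem h) _ (hmem h') hne) h1)

/-! ### Expansion from the spectral gap -/

/-- In an `(n, d, λ)`-graph with `λ < d`, every vertex set `X` satisfies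
`|Γ(X)| ≥ d² |X| / (d² |X| / n + λ²)`. The all-ones vector spans the top eigenspace, so the expansion
of the indicator of `X` in an eigenbasis bounds `∑_v |N(v) ∩ X|²`; Cauchy–Schwarz does the
rest. -/
lemma card_Nb_mul_ge {n d : ℕ} {lam : ℝ} (h : IsNDL G n d lam) (hlam : lam < d) (hn : 0 < n)
    (X : Finset V) :
    (d : ℝ) ^ 2 * (X.card : ℝ) ^ 2 ≤
      ((Nb G X).card : ℝ) * ((d : ℝ) ^ 2 * (X.card : ℝ) ^ 2 / n + lam ^ 2 * X.card) := by
  obtain ⟨hcard, hreg, hH, v₀, -, hsmall⟩ := h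
  set A := G.adjMatrix ℝ with hA
  set b := hH.eigenvectorBasis with hb
  let c : V → (V → ℝ) → ℝ := fun j x => ∑ i, b j i * x i
  have parseval : ∀ x y : V → ℝ, ∑ j, c j x * c j y = ∑ i, x i * y i := by
    intro x y
    have h1 := b.sum_inner_mul_inner (WithLp.toLp 2 x) (WithLp.toLp 2 y)
    simp only [PiLp.inner_apply, RCLike.inner_apply, conj_trivial] at h1
    simp only [c]
    rw [← Finset.sum_congr rfl fun i _ => mul_comm (y i) (x i), ← h1]
    refine Finset.sum_congr rfl fun j _ => ?_
    congr 1
    exact Finset.sum_congr rfl fun i _ => mul_comm _ _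
  have hT : A.transpose = A := transpose_adjMatrix ..
  have eig : ∀ j (x : V → ℝ), c j (A.mulVec x) = hH.eigenvalues j * c j x := by
    intro j x
    have h1 := hH.mulVec_eigenvectorBasis j
    have h2 : c j (A.mulVec x) = (⇑(b j) : V → ℝ) ⬝ᵥ A.mulVec x := rfl
    have h3 : c j x = (⇑(b j) : V → ℝ) ⬝ᵥ x := rfl
    rw [h2, h3, Matrix.dotProduct_mulVec, ← Matrix.mulVec_transpose, hT, h1, smul_dotProduct, smul_eq_mul]
  let o : V → ℝ := fun _ => 1
  have Ao : A.mulVec o = (d : ℝ) • o := by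
    funext v
    simp [hA, o, adjMatrix_mulVec_apply, hreg.degree_eq v]
  have co : ∀ j, hH.eigenvalues j * c j o = d * c j o := by
    intro j
    rw [← eig, Ao]
    simp only [c, Pi.smul_apply, smul_eq_mul, Finset.mul_sum]
    exact Finset.sum_congr rfl fun i _ => by ring
  have co0 : ∀ j, j ≠ v₀ → c j o = 0 := by
    intro j hj
    by_contra hne
    have h1 := mul_right_cancel₀ hne (co j)
    have h2 := le_abs_self (hH.eigenvalues j)
    have h3 := hsmall j hj
    linarith
  have inner_o : ∀ x : V → ℝ, c v₀ o * c v₀ x = ∑ i, x i := by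
    intro x
    have h1 := parseval o x
    rw [Finset.sum_eq_single v₀ (fun j _ hj => by rw [co0 j hj, zero_mul]) (by simp)] at h1
    rw [h1]; simp [o]
  have co_sq : c v₀ o * c v₀ o = n := by
    rw [inner_o]; simp [o, hcard]
  have hn' : (0 : ℝ) < n := by exact_mod_cast hn
  have cne : c v₀ o ≠ 0 := by
    intro h0; rw [h0, mul_zero] at co_sq; linarith
  have top : hH.eigenvalues v₀ = d := mul_right_cancel₀ cne (co v₀)
  let x : V → ℝ := fun v => if v ∈ X then 1 else 0
  have sx : ∑ i, x i = X.card := by simp [x]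
  have sxx : ∑ i, x i * x i = X.card := by simp [x]
  have cx : (c v₀ x) ^ 2 = (X.card : ℝ) ^ 2 / n := by
    rw [eq_div_iff hn'.ne', ← co_sq, ← sx, ← inner_o]; ring
  have norm_le : ∑ i, A.mulVec x i * A.mulVec x i ≤
      (d : ℝ) ^ 2 * (X.card : ℝ) ^ 2 / n + lam ^ 2 * X.card := by
    rw [← parseval, ← Finset.add_sum_erase _ _ (Finset.mem_univ v₀), eig, top]
    have h1 : ∑ j ∈ Finset.univ.erase v₀, c j (A.mulVec x) * c j (A.mulVec x) ≤
        ∑ j ∈ Finset.univ.erase v₀, lam ^ 2 * (c j x * c j x) := by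
      refine Finset.sum_le_sum fun j hj => ?_
      rw [eig]
      have h2 := hsmall j (Finset.ne_of_mem_erase hj)
      have h3 : hH.eigenvalues j ^ 2 ≤ lam ^ 2 := sq_le_sq' (by linarith [neg_abs_le (hH.eigenvalues j)])
        ((le_abs_self _).trans h2)
      nlinarith [mul_le_mul_of_nonneg_right h3 (mul_self_nonneg (c j x))]
    have h2 : ∑ j ∈ Finset.univ.erase v₀, lam ^ 2 * (c j x * c j x) ≤ lam ^ 2 * X.card := by
      rw [← Finset.mul_sum]
      refine mul_le_mul_of_nonneg_left ?_ (sq_nonneg _)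
      rw [← sxx, ← parseval]
      exact Finset.sum_le_sum_of_subset_of_nonneg (Finset.erase_subset _ _)
        fun j _ _ => mul_self_nonneg _
    have h3 : (d : ℝ) * c v₀ x * (d * c v₀ x) = (d : ℝ) ^ 2 * (X.card : ℝ) ^ 2 / n := by
      rw [mul_div_assoc, ← cx]; ring
    rw [h3]
    linarith
  have sA : ∑ i, A.mulVec x i = d * X.card := by
    rw [← inner_o, eig, top, ← sx, ← inner_o]; ring
  have supp : ∀ i, i ∉ Nb G X → A.mulVec x i = 0 := by
    intro i hi
    rw [hA, adjMatrix_mulVec_apply]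
    refine Finset.sum_eq_zero fun u hu => ?_
    rw [mem_neighborFinset] at hu
    exact if_neg fun hn => hi (mem_Nb.2 ⟨u, hn, hu.symm⟩)
  have sA' : ∑ i ∈ Nb G X, A.mulVec x i = d * X.card := by
    rw [← sA]
    exact Finset.sum_subset (Finset.subset_univ _) fun i _ hi => supp i hi
  have cs := sq_sum_le_card_mul_sum_sq (s := Nb G X) (f := fun i => A.mulVec x i)
  rw [sA'] at cs
  calc (d : ℝ) ^ 2 * (X.card : ℝ) ^ 2 = (d * X.card : ℝ) ^ 2 := by ring
    _ ≤ _ := cs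
    _ ≤ _ := by
      refine mul_le_mul_of_nonneg_left (le_trans ?_ norm_le) (Nat.cast_nonneg _)
      simp only [← sq]
      exact Finset.sum_le_sum_of_subset_of_nonneg (Finset.subset_univ _)
        fun j _ _ => sq_nonneg _

/-! ### Choosing the branch vertices -/

/-- How much two vertices interfere as branch vertices: their number of common neighbours, plus one
if they are adjacent. -/
def clash (G : SimpleGraph V) [DecidableRel G.Adj] (x y : V) : ℕ :=
  (G.neighborFinset x ∩ G.neighborFinset y).card + if G.Adj x y then 1 else 0

lemma clash_comm (x y : V) : clash G x y = clash G y x := by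
  simp only [clash, Finset.inter_comm (G.neighborFinset x), G.adj_comm x y]

lemma sum_clash {d : ℕ} (h : G.IsRegularOfDegree d) (x : V) :
    ∑ y, clash G x y = d ^ 2 + d := by
  unfold clash
  rw [Finset.sum_add_distrib]
  congr 1
  · have h1 : ∀ y, (G.neighborFinset x ∩ G.neighborFinset y).card =
        ∑ u ∈ G.neighborFinset x, if G.Adj u y then 1 else 0 := by
      intro y
      rw [← Finset.card_filter]
      congr 1
      ext u
      simp [G.adj_comm u y]
    simp_rw [h1]
    rw [Finset.sum_comm]
    have h2 : ∀ u, (∑ y, if G.Adj u y then 1 else 0) = d := by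
      intro u
      rw [← Finset.card_filter, ← h.degree_eq u, ← card_neighborFinset_eq_degree]
      congr 1
      ext y; simp
    simp [h2, h.degree_eq x, sq]
  · rw [← Finset.card_filter]
    conv_rhs => rw [← h.degree_eq x, ← card_neighborFinset_eq_degree]
    congr 1
    ext y; simp

/-- Total interference inside `S`, over ordered pairs. -/
def energy (G : SimpleGraph V) [DecidableRel G.Adj] (S : Finset V) : ℕ :=
  ∑ x ∈ S, ∑ y ∈ S.erase x, clash G x y

lemma energy_insert {T : Finset V} {x : V} (hx : x ∉ T) :
    energy G (insert x T) = energy G T + 2 * ∑ y ∈ T, clash G x y := by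
  unfold energy
  rw [Finset.sum_insert hx, Finset.erase_insert hx]
  have h1 : ∀ z ∈ T, ∑ y ∈ (insert x T).erase z, clash G z y =
      clash G x z + ∑ y ∈ T.erase z, clash G z y := by
    intro z hz
    have hne : x ≠ z := by rintro rfl; exact hx hz
    rw [Finset.erase_insert_of_ne hne, Finset.sum_insert (by simp [hx]), clash_comm]
  rw [Finset.sum_congr rfl h1, Finset.sum_add_distrib]
  ring

/-- A `t`-set of minimal energy: replacing one of its vertices by an average outside vertex
does not help, so each vertex interferes little with the rest of the set. -/
lemma exists_branch {d t : ℕ} (h : G.IsRegularOfDegree d) (ht : t ≤ Fintype.card V) :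
    ∃ S : Finset V, S.card = t ∧ ∀ x ∈ S,
      (Fintype.card V - t) * ∑ y ∈ S.erase x, clash G x y ≤ t * (d ^ 2 + d) := by
  obtain ⟨S, hS, hmin⟩ := Finset.exists_min_image (Finset.powersetCard t (Finset.univ : Finset V))
    (energy G) (Finset.powersetCard_nonempty.2 (by simpa using ht))
  rw [Finset.mem_powersetCard] at hS
  refine ⟨S, hS.2, fun x hx => ?_⟩
  have key : ∀ z ∈ Sᶜ, ∑ y ∈ S.erase x, clash G x y ≤ ∑ y ∈ S.erase x, clash G z y := by
    intro z hz
    rw [Finset.mem_compl] at hz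
    have hz' : z ∉ S.erase x := fun hn => hz (Finset.mem_of_mem_erase hn)
    have h1 := hmin (insert z (S.erase x)) (by
      rw [Finset.mem_powersetCard]
      refine ⟨Finset.subset_univ _, ?_⟩
      rw [Finset.card_insert_of_notMem hz', Finset.card_erase_add_one hx, hS.2])
    rw [energy_insert hz'] at h1
    conv_lhs at h1 => rw [← Finset.insert_erase hx]
    rw [energy_insert (Finset.notMem_erase x S)] at h1
    omega
  have h2 := Finset.card_nsmul_le_sum _ _ _ key
  rw [Finset.card_compl, hS.2, smul_eq_mul] at h2
  refine h2.trans ?_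
  rw [Finset.sum_comm]
  calc ∑ y ∈ S.erase x, ∑ z ∈ Sᶜ, clash G z y ≤ ∑ y ∈ S.erase x, (d ^ 2 + d) := by
        refine Finset.sum_le_sum fun y _ => ?_
        rw [← sum_clash h y]
        simp_rw [clash_comm _ y]
        exact Finset.sum_le_sum_of_subset (Finset.subset_univ _)
    _ ≤ t * (d ^ 2 + d) := by
        rw [Finset.sum_const, smul_eq_mul]
        exact Nat.mul_le_mul_right _ (by rw [← hS.2]; exact Finset.card_erase_le)

/-- Branch vertices with little interference have large private neighbourhoods. -/
lemma branch_expand {d c : ℕ} (h : G.IsRegularOfDegree d) {S : Finset V}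
    (hS : ∀ x ∈ S, ∑ y ∈ S.erase x, clash G x y ≤ c) {U : Finset V} (hU : U ⊆ S) :
    U.card * d ≤ (Nb G U \ S).card + U.card * c := by
  let Q : V → Finset V := fun x =>
    (G.neighborFinset x \ S) \ (S.erase x).biUnion fun y => G.neighborFinset y
  have hQ : ∀ x ∈ U, d ≤ (Q x).card + c := by
    intro x hx
    have h0 := hS x (hU hx)
    have h1 : G.neighborFinset x ⊆ Q x ∪ (((S.erase x).filter fun y => G.Adj x y) ∪
        (S.erase x).biUnion fun y => G.neighborFinset x ∩ G.neighborFinset y) := by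
      intro z hz
      have hz' := (mem_neighborFinset _ _ _).1 hz
      by_cases hzS : z ∈ S
      · simp [hzS, hz', hz'.ne']
      · by_cases hb : z ∈ (S.erase x).biUnion fun y => G.neighborFinset y
        · refine Finset.mem_union_right _ (Finset.mem_union_right _ ?_)
          obtain ⟨y, hy, hzy⟩ := Finset.mem_biUnion.1 hb
          exact Finset.mem_biUnion.2 ⟨y, hy, Finset.mem_inter.2 ⟨hz, hzy⟩⟩
        · exact Finset.mem_union_left _
            (Finset.mem_sdiff.2 ⟨Finset.mem_sdiff.2 ⟨hz, hzS⟩, hb⟩)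
    have h2 := Finset.card_le_card h1
    rw [card_neighborFinset_eq_degree, h.degree_eq x] at h2
    have h3 := Finset.card_union_le (Q x) (((S.erase x).filter fun y => G.Adj x y) ∪
        (S.erase x).biUnion fun y => G.neighborFinset x ∩ G.neighborFinset y)
    have h4 := Finset.card_union_le ((S.erase x).filter fun y => G.Adj x y)
      ((S.erase x).biUnion fun y => G.neighborFinset x ∩ G.neighborFinset y)
    have h5 : ((S.erase x).biUnion fun y => G.neighborFinset x ∩ G.neighborFinset y).card ≤
      ∑ y ∈ S.erase x, (G.neighborFinset x ∩ G.neighborFinset y).card := Finset.card_biUnion_le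
    unfold clash at h0
    rw [Finset.sum_add_distrib, ← Finset.card_filter] at h0
    omega
  have hdisj : ∀ x ∈ U, ∀ y ∈ U, x ≠ y → Disjoint (Q x) (Q y) := by
    intro x hx y hy hxy
    rw [Finset.disjoint_left]
    intro z hz hz2
    refine (Finset.mem_sdiff.1 hz).2 (Finset.mem_biUnion.2 ⟨y, ?_, ?_⟩)
    · exact Finset.mem_erase.2 ⟨hxy.symm, hU hy⟩
    · exact (Finset.mem_sdiff.1 (Finset.mem_sdiff.1 hz2).1).1
  have hsub : U.biUnion Q ⊆ Nb G U \ S := by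
    intro z hz
    obtain ⟨x, hx, hzx⟩ := Finset.mem_biUnion.1 hz
    have h1 := Finset.mem_sdiff.1 (Finset.mem_sdiff.1 hzx).1
    exact Finset.mem_sdiff.2 ⟨Finset.mem_biUnion.2 ⟨x, hx, h1.1⟩, h1.2⟩
  have h6 := Finset.card_le_card hsub
  rw [Finset.card_biUnion hdisj] at h6
  have h7 := Finset.sum_le_sum hQ
  rw [Finset.sum_add_distrib, Finset.sum_const, Finset.sum_const, smul_eq_mul, smul_eq_mul] at h7
  omega

/-- No vertex has many neighbours among branch vertices with little interference, as any
two of them would have that vertex as a common neighbour. -/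
lemma branch_degree {c : ℕ} {S : Finset V}
    (hS : ∀ x ∈ S, ∑ y ∈ S.erase x, clash G x y ≤ c) (v : V) :
    (G.neighborFinset v ∩ S).card ≤ c + 1 := by
  rcases (G.neighborFinset v ∩ S).eq_empty_or_nonempty with h0 | ⟨x, hx⟩
  · simp [h0]
  rw [← Finset.card_erase_add_one hx]
  obtain ⟨hxv, hxS⟩ := Finset.mem_inter.1 hx
  rw [mem_neighborFinset] at hxv
  have h1 : ((G.neighborFinset v ∩ S).erase x).card ≤
      ∑ y ∈ (G.neighborFinset v ∩ S).erase x, clash G x y := by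
    rw [Finset.card_eq_sum_ones]
    refine Finset.sum_le_sum fun y hy => ?_
    have hy1 := (Finset.mem_inter.1 (Finset.mem_of_mem_erase hy)).1
    rw [mem_neighborFinset] at hy1
    have : 0 < (G.neighborFinset x ∩ G.neighborFinset y).card :=
      Finset.card_pos.2 ⟨v, by simp [hxv.symm, hy1.symm]⟩
    unfold clash
    omega
  have h2 : ∑ y ∈ (G.neighborFinset v ∩ S).erase x, clash G x y ≤
      ∑ y ∈ S.erase x, clash G x y :=
    Finset.sum_le_sum_of_subset (Finset.erase_subset_erase _ Finset.inter_subset_right)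
  have := hS x hxS
  omega

/-! ### The initial condition -/

/-- The arithmetic behind the initial condition. `u₁` and `u₂` count the branch and non-branch
vertices of a set, and `D` its neighbours that are not branch vertices. -/
lemma demand_le {η d t c u₁ u₂ D : ℝ} (hη0 : 0 < η) (hη1 : η < 1 / 2) (hd : 4 ≤ d)
    (htd : t ≤ (1 - η) * d) (hc : c ≤ η * d / 2) (hu₁ : u₁ = 0 ∨ 1 ≤ u₁)
    (hu₂ : 0 ≤ u₂) (F1 : u₁ * d ≤ D + u₁ * c) (F2 : 512 * (u₁ + u₂) ≤ η ^ 2 * (D + t))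
    (F3 : u₂ = 0 ∨ d ≤ D + c + 1) : t * u₁ + 3 * u₂ ≤ D := by
  have hη2 : η ^ 2 ≤ 1 / 4 := by nlinarith
  have hpos : 0 < η ^ 2 := by positivity
  have htd' : t ≤ d := by nlinarith
  have hu₁0 : 0 ≤ u₁ := by rcases hu₁ with h | h <;> linarith
  by_cases hA : 3 * u₂ ≤ η * d / 2 * u₁
  -- few non-branch vertices: private neighbourhoods suffice
  · nlinarith [mul_le_mul_of_nonneg_left hc hu₁0, mul_le_mul_of_nonneg_left htd hu₁0]
  push Not at hA
  rcases hu₁ with h0 | h1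
  · subst h0
    rcases F3 with h2 | h2
    · exfalso; simp [h2] at hA
    by_cases h6 : 6 * u₂ ≤ d
    · nlinarith
    -- from here on the spectral expansion dominates
    · push Not at h6
      have h7 : η ^ 2 * (3 * u₂) ≤ η ^ 2 * D := by nlinarith
      have := le_of_mul_le_mul_left h7 hpos
      linarith
  · have h2 : η * d ≤ 6 * u₂ := by nlinarith
    have h3 : η * (d * u₁) ≤ 6 * u₂ := by nlinarith
    have h4 : η * t ≤ 6 * u₂ := (mul_le_mul_of_nonneg_left htd' hη0.le).trans h2
    have h5 : η * (t * u₁) ≤ 6 * u₂ :=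
      (mul_le_mul_of_nonneg_left (mul_le_mul_of_nonneg_right htd' hu₁0) hη0.le).trans h3
    have h6 : η * (η * t) ≤ η * (6 * u₂) := mul_le_mul_of_nonneg_left h4 hη0.le
    have h7 : η * (η * (t * u₁)) ≤ η * (6 * u₂) := mul_le_mul_of_nonneg_left h5 hη0.le
    have h8 : η ^ 2 * (t * u₁ + 3 * u₂) ≤ η ^ 2 * D := by nlinarith
    exact le_of_mul_le_mul_left h8 hpos

set_option maxHeartbeats 1000000 in
/-- The result for fixed parameters: `p` and `q` are the depths of the two trees grown for
each pair and `M + 1` the size of their last layers. -/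
lemma subdivision_of_params {η : ℝ} (hη0 : 0 < η) (hη1 : η < 1 / 2) {n d M p q : ℕ} {lam : ℝ}
    (h : IsNDL G n d lam) (hd : 2048 * lam / η ^ 2 < d) (hn : 4096 ≤ η ^ 2 * n)
    (hdn : 8 * (d : ℝ) ^ 2 ≤ η * n) (hM : M = ⌊η ^ 2 / 2048 * n⌋₊) (hp : M < 3 ^ p)
    (hq : M < 3 ^ q)
    (hN : 4 * ((d : ℝ) ^ 2 * (p + q + 4) + d + (p + q + 8)) ≤ n) :
    HasBalancedCliqueSubdivision G ⌊(1 - η) * (d : ℝ)⌋₊ (p + q + 2) := by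
  have hη2 : η ^ 2 < 1 / 4 := by nlinarith
  have hηp : 0 < η ^ 2 := by positivity
  have hn8 : (8 : ℝ) ≤ n := by nlinarith
  have hn0 : (0 : ℝ) < n := by linarith
  have hnN : 8 ≤ n := by exact_mod_cast hn8
  obtain ⟨hcard, hreg, hH, v₀, -, hsmall⟩ := id h
  have hlam0 : 0 ≤ lam := by
    obtain ⟨v, hv⟩ := Fintype.exists_ne_of_one_lt_card (by omega : 1 < Fintype.card V) v₀
    exact (abs_nonneg _).trans (hsmall v hv)
  set δ : ℝ := η ^ 2 / 2048 with hδ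
  have hδ0 : 0 < δ := by positivity
  have hδ1 : δ ≤ 1 / 8192 := by rw [hδ]; linarith
  have hlamd : lam < δ * d := by
    rw [div_lt_iff₀ hηp] at hd
    rw [hδ]; linarith
  have hd0 : (0 : ℝ) < d := by
    by_contra hn
    nlinarith
  have hlamd' : lam < d := by nlinarith
  -- vertex expansion, with `λ / d` replaced by `δ`
  have E : ∀ X : Finset V, (X.card : ℝ) ≤ ((Nb G X).card : ℝ) * (X.card / n + δ ^ 2) := by
    intro X
    rcases X.eq_empty_or_nonempty with rfl | hX
    · simp only [Finset.card_empty, Nat.cast_zero, zero_div, zero_add]; positivity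
    have hX0 : (0 : ℝ) < X.card := by exact_mod_cast Finset.card_pos.2 hX
    have h1 := card_Nb_mul_ge h hlamd' (by omega) X
    have h2 : lam ^ 2 ≤ δ ^ 2 * (d : ℝ) ^ 2 := by
      rw [← mul_pow]; exact pow_le_pow_left₀ hlam0 hlamd.le 2
    have h3 : (d : ℝ) ^ 2 * (X.card : ℝ) ^ 2 / n + lam ^ 2 * X.card ≤
        ((d : ℝ) ^ 2 * X.card) * (X.card / n + δ ^ 2) := by
      have : (d : ℝ) ^ 2 * (X.card : ℝ) ^ 2 / n = (d : ℝ) ^ 2 * X.card * (X.card / n) := by ring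
      rw [this, mul_add]
      have := mul_le_mul_of_nonneg_right h2 hX0.le
      nlinarith
    have h4 := h1.trans (mul_le_mul_of_nonneg_left h3 (Nat.cast_nonneg _))
    have h5 : (0 : ℝ) < (d : ℝ) ^ 2 * X.card := by positivity
    refine le_of_mul_le_mul_left ?_ h5
    calc (d : ℝ) ^ 2 * X.card * X.card = (d : ℝ) ^ 2 * (X.card : ℝ) ^ 2 := by ring
      _ ≤ _ := h4
      _ = _ := by ring
  have hMle : (M : ℝ) ≤ δ * n := by rw [hM]; exact Nat.floor_le (by positivity)
  have hMlt : δ * n < M + 1 := by rw [hM]; exact Nat.lt_floor_add_one _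
  have hδn : 2 ≤ δ * n := by rw [hδ]; linarith
  -- `|X| / n ≤ 3δ` and `δ² ≤ δ`, and `4δ = η² / 512`
  have Esmall : ∀ X : Finset V, X.card ≤ 2 * (M + 1) →
      512 * (X.card : ℝ) ≤ η ^ 2 * (Nb G X).card := by
    intro X hX
    have h1 : (X.card : ℝ) ≤ 2 * (M + 1) := by exact_mod_cast hX
    have h2 : (X.card : ℝ) / n ≤ 3 * δ := by rw [div_le_iff₀ hn0]; linarith
    have h3 : (X.card : ℝ) / n + δ ^ 2 ≤ 4 * δ := by nlinarith
    have h4 := (E X).trans (mul_le_mul_of_nonneg_left h3 (Nat.cast_nonneg _))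
    rw [hδ] at h4
    linarith
  have Ebig : ∀ X : Finset V, M + 1 ≤ X.card → (n : ℝ) ≤ 2 * (Nb G X).card := by
    intro X hX
    have h1 : (M : ℝ) + 1 ≤ X.card := by exact_mod_cast hX
    have hX0 : (0 : ℝ) < X.card := by linarith
    have h2 : δ ≤ (X.card : ℝ) / n := by rw [le_div_iff₀ hn0]; linarith
    have h3 : (X.card : ℝ) / n + δ ^ 2 ≤ 2 * (X.card / n) := by nlinarith
    have h4 := (E X).trans (mul_le_mul_of_nonneg_left h3 (Nat.cast_nonneg _))
    have h5 : (X.card : ℝ) * n ≤ X.card * (2 * (Nb G X).card) := by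
      have h6 : (X.card : ℝ) * n ≤ ((Nb G X).card * (2 * (X.card / n))) * n :=
        mul_le_mul_of_nonneg_right h4 hn0.le
      have h7 : (((Nb G X).card : ℝ) * (2 * (X.card / n))) * n = X.card * (2 * (Nb G X).card) := by
        field_simp
      linarith
    exact le_of_mul_le_mul_left h5 hX0
  -- if no edge joins `A` and `B`, then `Γ(A)` misses more than `δ n` vertices
  have hjoin : ∀ A B : Finset V, A.card = M + 1 → B.card = M + 1 →
      ∃ x ∈ A, ∃ y ∈ B, G.Adj x y := by
    intro A B hA hB
    by_contra hcon
    push Not at hcon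
    have h1 : Nb G A ⊆ Bᶜ := by
      intro y hy
      obtain ⟨x, hx, hxy⟩ := mem_Nb.1 hy
      exact Finset.mem_compl.2 fun hyB => hcon x hx y hyB hxy
    have h2 := Finset.card_le_card h1
    rw [Finset.card_compl, hcard, hB] at h2
    have hBn : M + 1 ≤ n := by rw [← hB, ← hcard]; exact Finset.card_le_univ B
    have h3 : ((Nb G A).card : ℝ) ≤ n - (M + 1) := by
      have h4 : (Nb G A).card + (M + 1) ≤ n := by omega
      have : ((Nb G A).card : ℝ) + (M + 1) ≤ n := by exact_mod_cast h4
      linarith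
    have h4 := E A
    rw [hA] at h4
    push_cast at h4
    set a : ℝ := ((M : ℝ) + 1) / n with ha
    have ha' : (M : ℝ) + 1 = a * n := by rw [ha]; field_simp
    have h5 : δ < a := by rw [ha, lt_div_iff₀ hn0]; exact hMlt
    have h6 : a * n ≤ (n - a * n) * (a + δ ^ 2) := by
      rw [← ha']
      refine h4.trans (mul_le_mul_of_nonneg_right h3 ?_)
      positivity
    have h7 : n * (a ^ 2 + a * δ ^ 2) ≤ n * δ ^ 2 := by nlinarith
    have h8 := le_of_mul_le_mul_left h7 hn0
    have h9 : δ ^ 2 < a ^ 2 := pow_lt_pow_left₀ h5 hδ0.le two_ne_zero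
    have h10 := mul_pos (hδ0.trans h5) (pow_pos hδ0 2)
    linarith
  -- expansion of a single vertex
  have hd4 : (4 : ℝ) ≤ d := by
    have h1 := E {v₀}
    have h2 : (Nb G {v₀}).card = d := by
      simp [Nb, hreg.degree_eq v₀]
    rw [h2, Finset.card_singleton, Nat.cast_one] at h1
    have h3 : (1 : ℝ) / n ≤ 1 / 8 := one_div_le_one_div_of_le (by norm_num) hn8
    have h4 : (1 : ℝ) / n + δ ^ 2 ≤ 1 / 4 := by nlinarith
    have h5 := h1.trans (mul_le_mul_of_nonneg_left h4 hd0.le)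
    linarith
  set t := ⌊(1 - η) * (d : ℝ)⌋₊ with ht
  have htd : (t : ℝ) ≤ (1 - η) * d := Nat.floor_le (mul_nonneg (by linarith) hd0.le)
  have htd' : (t : ℝ) ≤ d := by nlinarith
  have h2d : 2 * (d : ℝ) ≤ n := by nlinarith
  have htn : t ≤ Fintype.card V := by
    rw [hcard]
    have : (t : ℝ) ≤ n := by linarith
    exact_mod_cast this
  obtain ⟨S, hSt, hS⟩ := exists_branch hreg htn
  set c := ⌊η * d / 2⌋₊ with hc
  have hcle : (c : ℝ) ≤ η * d / 2 := Nat.floor_le (by positivity)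
  have hSc : ∀ x ∈ S, ∑ y ∈ S.erase x, clash G x y ≤ c := by
    intro x hx
    rw [hc]
    apply Nat.le_floor
    have h1 := hS x hx
    rw [hcard] at h1 htn
    set r := ∑ y ∈ S.erase x, clash G x y
    have h2 : ((n : ℝ) - t) * r ≤ t * ((d : ℝ) ^ 2 + d) := by
      rw [← Nat.cast_sub htn]; exact_mod_cast h1
    have h3 : (t : ℝ) * ((d : ℝ) ^ 2 + d) ≤ d * (2 * (d : ℝ) ^ 2) := by
      refine mul_le_mul htd' (by nlinarith) (by positivity) hd0.le
    have h4 : (n : ℝ) / 2 * r ≤ ((n : ℝ) - t) * r :=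
      mul_le_mul_of_nonneg_right (by linarith) (Nat.cast_nonneg _)
    have h5 : (d : ℝ) * (8 * (d : ℝ) ^ 2) ≤ d * (η * n) := mul_le_mul_of_nonneg_left hdn hd0.le
    have h6 : (n : ℝ) * r ≤ n * (η * d / 2) := by nlinarith
    exact le_of_mul_le_mul_left h6 hn0
  obtain ⟨e⟩ : Nonempty (Fin t ≃ S) := ⟨(Fintype.equivFinOfCardEq (by simp [hSt])).symm⟩
  let φ : Fin t → V := fun i => (e i : V)
  have hφ : Function.Injective φ := fun i j hij => e.injective (Subtype.ext hij)
  have himg : Finset.univ.image φ = S := by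
    ext x
    simp only [Finset.mem_image, Finset.mem_univ, true_and, φ]
    constructor
    · rintro ⟨i, rfl⟩; exact (e i).2
    · intro hx; exact ⟨e.symm ⟨x, hx⟩, by simp⟩
  let f₀ : V → ℤ := fun x => if x ∈ S then t else 3
  have sumf : ∀ U : Finset V, ∑ x ∈ U, f₀ x = t * (U ∩ S).card + 3 * (U \ S).card := by
    intro U
    rw [← Finset.sum_inter_add_sum_sdiff U S]
    congr 1
    · rw [Finset.sum_congr rfl fun x hx => if_pos (Finset.mem_inter.1 hx).2]
      simp [mul_comm]
    · rw [Finset.sum_congr rfl fun x hx => if_neg (Finset.mem_sdiff.1 hx).2]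
      simp [mul_comm]
  have ext₀ : Extendable G (M + 1) S f₀ := by
    intro U hU
    rw [sumf]
    have F1 := branch_expand hreg hSc (Finset.inter_subset_right : U ∩ S ⊆ S)
    have F1' := Finset.card_le_card (Finset.sdiff_subset_sdiff
      (Nb_mono (G := G) (Finset.inter_subset_left : U ∩ S ⊆ U)) (Finset.Subset.refl S))
    have F2 := Esmall U hU
    have F2' := Finset.card_le_card_sdiff_add_card (s := Nb G U) (t := S)
    rw [hSt] at F2'
    have F2'' := Finset.card_inter_add_card_sdiff U S
    have F3 : (U \ S).card = 0 ∨ d ≤ (Nb G U \ S).card + c + 1 := by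
      rcases (U \ S).eq_empty_or_nonempty with h0 | ⟨v, hv⟩
      · left; simp [h0]
      · right
        have h1 := branch_degree hSc v
        have h2 := Finset.card_inter_add_card_sdiff (G.neighborFinset v) S
        rw [card_neighborFinset_eq_degree, hreg.degree_eq v] at h2
        have h3 : G.neighborFinset v \ S ⊆ Nb G U \ S := by
          refine Finset.sdiff_subset_sdiff (fun z hz => ?_) (Finset.Subset.refl S)
          exact Finset.mem_biUnion.2 ⟨v, (Finset.mem_sdiff.1 hv).1, hz⟩
        have h4 := Finset.card_le_card h3
        omega
    have key : (t : ℝ) * (U ∩ S).card + 3 * (U \ S).card ≤ (Nb G U \ S).card := by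
      refine demand_le hη0 hη1 hd4 htd hcle ?_ (Nat.cast_nonneg _) ?_ ?_ ?_
      · rcases Nat.eq_zero_or_pos (U ∩ S).card with h0 | h0
        · left; exact_mod_cast h0
        · right; exact_mod_cast h0
      · have : (U ∩ S).card * d ≤ (Nb G U \ S).card + (U ∩ S).card * c := by omega
        exact_mod_cast this
      · have h1 : ((Nb G U).card : ℝ) ≤ (Nb G U \ S).card + t := by exact_mod_cast F2'
        have h2 : ((U ∩ S).card : ℝ) + (U \ S).card = U.card := by exact_mod_cast F2''
        rw [h2]
        exact F2.trans (mul_le_mul_of_nonneg_left h1 hηp.le)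
      · rcases F3 with h0 | h0
        · left; exact_mod_cast h0
        · right; exact_mod_cast h0
    exact_mod_cast key
  have big₀ : Big G (M + 1) f₀ (t + t ^ 2 * (p + q + 3) + 2 + (2 * M + p) + (2 * M + q)) := by
    intro U h1 h2
    rw [sumf]
    have k1 : ((U ∩ S).card : ℝ) ≤ t := by
      have := Finset.card_le_card (Finset.inter_subset_right : U ∩ S ⊆ S)
      rw [hSt] at this
      exact_mod_cast this
    have k2 : ((U \ S).card : ℝ) ≤ 2 * (M + 1) := by
      have := Finset.card_le_card (Finset.sdiff_subset : U \ S ⊆ U)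
      exact_mod_cast this.trans h2
    have k3 := Ebig U h1
    have k4 : (t : ℝ) * (U ∩ S).card ≤ (t : ℝ) ^ 2 := by
      rw [sq]; exact mul_le_mul_of_nonneg_left k1 (Nat.cast_nonneg _)
    have k5 : (t : ℝ) ^ 2 * (p + q + 4) ≤ (d : ℝ) ^ 2 * (p + q + 4) :=
      mul_le_mul_of_nonneg_right (pow_le_pow_left₀ (Nat.cast_nonneg _) htd' 2) (by positivity)
    have key : (t : ℝ) * (U ∩ S).card + 3 * (U \ S).card +
        (t + t ^ 2 * (p + q + 3) + 2 + (2 * M + p) + (2 * M + q)) < (Nb G U).card := by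
      nlinarith
    exact_mod_cast key
  refine embed φ hφ (by rw [himg]; exact ext₀) ?_ ?_ hp hq big₀ hjoin
  · intro i
    have : φ i ∈ S := (e i).2
    simp [f₀, this]
  · intro x hx
    rw [himg] at hx
    simp [f₀, hx]

/-! ### Choice of parameters -/

lemma eventually_log_le {r c : ℝ} (hr : 0 < r) (hc : 0 < c) (b : ℝ) :
    ∀ᶠ x : ℝ in Filter.atTop, 2 * Real.log x + b ≤ c * x ^ r := by
  have h1 := (isLittleO_log_rpow_atTop hr).bound (c := c / 4) (by positivity)
  have h2 := (tendsto_rpow_atTop hr).eventually_ge_atTop (2 * b / c)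
  filter_upwards [h1, h2, Filter.eventually_ge_atTop 0] with x h1 h2 h3
  rw [Real.norm_eq_abs, Real.norm_of_nonneg (Real.rpow_nonneg h3 r)] at h1
  rw [div_le_iff₀ hc] at h2
  have := le_abs_self (Real.log x)
  linarith

lemma params_eventually (ε η : ℝ) (hε : 0 < ε) (hη0 : 0 < η) :
    ∀ᶠ n : ℕ in Filter.atTop, 4096 ≤ η ^ 2 * (n : ℝ) ∧ 1 ≤ (n : ℝ) ∧
      2 * Real.log n + 13 ≤ 1 / 8 * (n : ℝ) ^ (1 : ℝ) ∧
      2 * Real.log n + 10 ≤ 1 / 8 * (n : ℝ) ^ (2 * ε) := by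
  have h0 : ∀ᶠ x : ℝ in Filter.atTop, 4096 ≤ η ^ 2 * x ∧ 1 ≤ x ∧
      2 * Real.log x + 13 ≤ 1 / 8 * x ^ (1 : ℝ) ∧ 2 * Real.log x + 10 ≤ 1 / 8 * x ^ (2 * ε) := by
    filter_upwards [Filter.eventually_ge_atTop (4096 / η ^ 2), Filter.eventually_ge_atTop 1,
      eventually_log_le (r := 1) (c := 1 / 8) one_pos (by norm_num) 13,
      eventually_log_le (r := 2 * ε) (c := 1 / 8) (by positivity) (by norm_num) 10] with x h1 h2 h3 h4
    refine ⟨?_, h2, h3, h4⟩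
    rwa [div_le_iff₀ (by positivity), mul_comm] at h1
  exact tendsto_natCast_atTop_atTop.eventually h0

end Growth
end BalSub

/-- balanced subdivisions in (n,d,λ)-graphs. -/
theorem balanced_clique_subdivision_in_ndl_graphs (ε η : ℝ) (hε : 0 < ε)
    (hη0 : 0 < η) (hη1 : η < 1 / 2) :
    ∃ n₀ : ℕ, ∀ n : ℕ, n₀ ≤ n →
      ∀ (d : ℕ) (lam : ℝ) (V : Type) [Fintype V] [DecidableEq V]
        (G : SimpleGraph V) [DecidableRel G.Adj],
        IsNDL G n d lam →
        2048 * lam / η ^ 2 < (d : ℝ) →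
        (d : ℝ) ≤ η * (n : ℝ) ^ ((1 : ℝ) / 2 - ε) →
        HasBalancedCliqueSubdivision G ⌊(1 - η) * (d : ℝ)⌋₊
          (2 * ⌈Real.log (η ^ 2 * (n : ℝ) / 4096)⌉₊ + 5) := by
  obtain ⟨n₀, hn₀⟩ := Filter.eventually_atTop.1 (BalSub.params_eventually ε η hε hη0)
  refine ⟨n₀, fun n hn d lam V _ _ G _ h hd hdn => ?_⟩
  obtain ⟨k1, k2, k3, k4⟩ := hn₀ n hn
  have hn0 : (0 : ℝ) < n := by linarith
  set X : ℝ := η ^ 2 * (n : ℝ) / 4096 with hX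
  have hX1 : 1 ≤ X := by rw [hX]; linarith
  have hXn : X ≤ n := by
    have : η ^ 2 ≤ 1 := by nlinarith
    rw [hX]; nlinarith
  set s := ⌈Real.log X⌉₊ with hs
  have hlog0 : 0 ≤ Real.log n := Real.log_nonneg k2
  have hs1 : (s : ℝ) ≤ Real.log n + 1 := by
    have h1 := Nat.ceil_lt_add_one (Real.log_nonneg hX1)
    have h2 := Real.log_le_log (by linarith) hXn
    linarith
  have hd2 : (d : ℝ) ^ 2 ≤ η ^ 2 * (n : ℝ) ^ (1 - 2 * ε) := by
    have h1 := pow_le_pow_left₀ (Nat.cast_nonneg d) hdn 2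
    rw [mul_pow, ← Real.rpow_natCast ((n : ℝ) ^ _) 2, ← Real.rpow_mul hn0.le] at h1
    have e : ((1 : ℝ) / 2 - ε) * ((2 : ℕ) : ℝ) = 1 - 2 * ε := by push_cast; ring
    rwa [e] at h1
  have hmul : (n : ℝ) ^ (1 - 2 * ε) * (n : ℝ) ^ (2 * ε) = n := by
    rw [← Real.rpow_add hn0]; simp
  have hy0 : 0 ≤ (n : ℝ) ^ (1 - 2 * ε) := Real.rpow_nonneg hn0.le _
  have hy : (n : ℝ) ^ (1 - 2 * ε) * (2 * Real.log n + 10) ≤ n / 8 := by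
    have := mul_le_mul_of_nonneg_left k4 hy0
    linarith
  have hy4 : (n : ℝ) ^ (1 - 2 * ε) * 10 ≤ n / 8 := by
    have := mul_nonneg hy0 hlog0
    linarith
  have hd3 : (d : ℝ) ^ 2 ≤ (n : ℝ) ^ (1 - 2 * ε) := by
    have : η ^ 2 ≤ 1 := by nlinarith
    linarith [mul_le_mul_of_nonneg_right this hy0]
  have hdd : (d : ℝ) ≤ (d : ℝ) ^ 2 := by
    exact_mod_cast Nat.le_self_pow two_ne_zero d
  -- `3 ^ s ≥ e ^ s ≥ X`, while the last layers have at most `2X + 1` vertices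
  have hM : ⌊η ^ 2 / 2048 * (n : ℝ)⌋₊ < 3 ^ (s + 1) := by
    rw [Nat.floor_lt (by positivity)]
    push_cast
    have h1 : X ≤ 3 ^ s := by
      calc X = Real.exp (Real.log X) := (Real.exp_log (by linarith)).symm
        _ ≤ Real.exp s := Real.exp_le_exp.2 (Nat.le_ceil _)
        _ = Real.exp 1 ^ s := by rw [← Real.exp_nat_mul, mul_one]
        _ ≤ 3 ^ s := pow_le_pow_left₀ (Real.exp_pos _).le
            (by linarith [Real.exp_one_lt_d9]) s
    rw [pow_succ (3 : ℝ)]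
    have h2 : η ^ 2 / 2048 * (n : ℝ) = 2 * X := by rw [hX]; ring
    rw [h2]
    linarith
  have key := BalSub.subdivision_of_params (p := s + 2) (q := s + 1) hη0 hη1 h hd k1 (by
      have h1 : η ^ 2 * (n : ℝ) ^ (1 - 2 * ε) ≤ η ^ 2 * (n / 80) :=
        mul_le_mul_of_nonneg_left (by linarith) (by positivity)
      nlinarith [mul_pos hη0 hn0]) rfl
    (hM.trans (pow_lt_pow_right₀ (by norm_num) (by omega))) hM (by
      push_cast
      rw [Real.rpow_one] at k3
      have h1 : (d : ℝ) ^ 2 * (2 * s + 7) ≤ (n : ℝ) ^ (1 - 2 * ε) * (2 * Real.log n + 9) :=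
        mul_le_mul hd3 (by linarith) (by positivity) hy0
      nlinarith)
  convert key using 1
  omega
end

section
/- For every 0 < η < 1/2 there exists ε > 0 such that every (n,d,λ)-graph G with 1/ε < d < ε·n^{1/2} and λ < d^{1−η} contains a subdivision of the complete graph K_t, where t = ⌊(1−η)d⌋. -/
/-!
The subdivision is built by the method of Friedman and Pippenger for embedding forests in
expanders, with rollback.

Call a set `X` of used vertices extendable for a demand function `r` if every small set `U` has at
least `∑ u ∈ U, r u` unused neighbours (`Extendable`). If medium-sized sets expand generously
(`LargeExpand`), then a unit of the demand of any vertex can be spent on a new leaf (`add_leaf`):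
sets for which the inequality is tight are closed under union, so a failure at every neighbour of
`s` would give a tight set containing all unused neighbours of `s` in its neighbourhood, and
adding `s` to it would break extendability. Conversely the leaves of a forest grown in this way may
be deleted again, the demand going back to the parents (`rollback`).

To join two used vertices, a complete `D`-ary tree is grown from each (`tree`) until the bottom
levels are so large that an edge must run between them; this closes a short path, and all other
vertices of the two trees are deleted (`connect`). So each connection costs few vertices, and one
unit of demand at each of its two ends. Starting from `t` branch vertices of demand `t`, all pairs
can be connected one after the other (`subdivision_of_extendable`).

The expander mixing lemma (`mixing`) supplies the expansion: with `K = d ^ η` and `λ < d / K`,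
disconnected sets `A`, `B` satisfy `|A| |B| ≤ (n / K) ^ 2`, and small sets expand into the
complement of the branch set by a factor of at least `K` (`Mixes.expand`). The branch vertices
themselves are chosen greedily, independent and with almost disjoint neighbourhoods
(`exists_branch`); the slack between `(1 - η) * d` and `(1 - η / 2) * d` is what makes the branch
set extendable (`Mixes.extendable`). Since `n / d ^ 2` is large, the at most `d ^ 2` paths, each of
length `O(1 / η + log (n / d ^ 2))`, use only a small fraction of the vertices.
-/

open SimpleGraph

/-! ### Extendable sets -/

section Subdiv

variable {V : Type*} [Fintype V] [DecidableEq V] (G : SimpleGraph V) [DecidableRel G.Adj]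

/-- The set of vertices with at least one neighbour in `U`; it may meet `U`. -/
def nbr (U : Finset V) : Finset V := U.biUnion fun u => G.neighborFinset u

/-- The used set `X` can still meet the demand `r`: every `U` with at most `2 * m` vertices has
enough unused neighbours to give each `u ∈ U` its own `r u` new neighbours (Hall's condition for
stars, restricted to small sets). -/
def Extendable (m : ℕ) (X : Finset V) (r : V → ℕ) : Prop :=
  ∀ U : Finset V, U.card ≤ 2 * m → ∑ u ∈ U, r u ≤ (nbr G U \ X).card

/-- Sets of size between `m` and `2 * m` expand well enough to meet the demand `r₀` with room for
`N` already used vertices. Hence, while at most `N` vertices are used, no such set violates or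
attains equality in `Extendable`. -/
def LargeExpand (m N : ℕ) (r₀ : V → ℕ) : Prop :=
  ∀ U : Finset V, m ≤ U.card → U.card ≤ 2 * m → ∑ u ∈ U, r₀ u + N < (nbr G U).card

variable {G}

lemma mem_nbr {U : Finset V} {v : V} : v ∈ nbr G U ↔ ∃ u ∈ U, G.Adj u v := by
  simp [nbr]

lemma nbr_mono {U W : Finset V} (h : U ⊆ W) : nbr G U ⊆ nbr G W :=
  Finset.biUnion_subset_biUnion_of_subset_left _ h

lemma nbr_union (U W : Finset V) : nbr G (U ∪ W) = nbr G U ∪ nbr G W :=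
  Finset.union_biUnion

lemma Extendable.anti {m : ℕ} {X : Finset V} {r r' : V → ℕ} (h : Extendable G m X r)
    (hr : ∀ u, r' u ≤ r u) : Extendable G m X r' := fun U hU =>
  (Finset.sum_le_sum fun u _ => hr u).trans (h U hU)

/-- Sets attaining equality in the extendability inequality are closed under union, by
submodularity of `U ↦ (nbr G U \ X).card`. -/
lemma critical_union {m : ℕ} {X : Finset V} {R : V → ℕ} (h : Extendable G m X R)
    {U W : Finset V} (hUm : U.card < m)
    (hU : (nbr G U \ X).card ≤ ∑ u ∈ U, R u) (hW : (nbr G W \ X).card ≤ ∑ u ∈ W, R u) :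
    (nbr G (U ∪ W) \ X).card ≤ ∑ u ∈ U ∪ W, R u := by
  have h1 := h (U ∩ W) ((Finset.card_le_card Finset.inter_subset_left).trans (by omega))
  have h2 := Finset.sum_union_inter (s₁ := U) (s₂ := W) (f := R)
  have h3 := Finset.card_union_add_card_inter (nbr G U \ X) (nbr G W \ X)
  have h4 : (nbr G (U ∩ W) \ X).card ≤ ((nbr G U \ X) ∩ (nbr G W \ X)).card := by
    apply Finset.card_le_card
    intro v hv
    have ha := nbr_mono (G := G) (Finset.inter_subset_left (s₁ := U) (s₂ := W))
    have hb := nbr_mono (G := G) (Finset.inter_subset_right (s₁ := U) (s₂ := W))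
    simp only [Finset.mem_sdiff, Finset.mem_inter] at hv ⊢
    exact ⟨⟨ha hv.1, hv.2⟩, hb hv.1, hv.2⟩
  have h5 : nbr G (U ∪ W) \ X = (nbr G U \ X) ∪ (nbr G W \ X) := by
    rw [nbr_union, Finset.union_sdiff_distrib]
  rw [h5]
  omega

/-- The Friedman–Pippenger step: one unit of the demand of `s` can be spent on an unused
neighbour `y` of `s`. Otherwise every unused neighbour `y` of `s` lies in the neighbourhood of a
tight set avoiding `s`; the union of these tight sets is again tight and small, and adding `s`
to it creates demand without any new neighbour. -/
lemma add_leaf {m N : ℕ} {r₀ r : V → ℕ} {X : Finset V} {s : V} (hm : 1 ≤ m)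
    (hL : LargeExpand G m N r₀) (hX : X.card ≤ N)
    (hr : ∀ u, (r + (Pi.single s 1 : V → ℕ)) u ≤ r₀ u) (h : Extendable G m X (r + (Pi.single s 1 : V → ℕ))) :
    ∃ y, G.Adj s y ∧ y ∉ X ∧ Extendable G m (insert y X) r := by
  by_contra! hcon
  have hbad : ∀ y, G.Adj s y → y ∉ X → ∃ U : Finset V, U.card < m ∧
      (nbr G U \ X).card ≤ ∑ u ∈ U, (r + (Pi.single s 1 : V → ℕ)) u ∧ s ∉ U ∧ y ∈ nbr G U := by
    intro y hy hyX
    have := hcon y hy hyX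
    simp only [Extendable, not_forall, not_le] at this
    obtain ⟨U, hU, hlt⟩ := this
    have h1 := h U hU
    have h2 : (nbr G U \ X).card ≤ (nbr G U \ insert y X).card + 1 := by
      rw [Finset.sdiff_insert]
      have := Finset.pred_card_le_card_erase (s := nbr G U \ X) (a := y); omega
    have h3 : ∑ u ∈ U, (r + (Pi.single s 1 : V → ℕ)) u = ∑ u ∈ U, r u + if s ∈ U then 1 else 0 := by
      simp only [Pi.add_apply, Finset.sum_add_distrib, Pi.single_apply]
      simp
    refine ⟨U, ?_, by omega, ?_, ?_⟩
    · by_contra! hmU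
      have h4 := hL U hmU hU
      have h5 := Finset.sum_le_sum fun u (_ : u ∈ U) => hr u
      have h6 := Finset.le_card_sdiff X (nbr G U)
      omega
    · intro hs
      rw [if_pos hs] at h3
      omega
    · by_contra hyU
      rw [Finset.sdiff_insert, Finset.erase_eq_of_notMem (by simp [hyU])] at hlt
      omega
  -- the tight sets are merged one at a time; `LargeExpand` keeps each union below size `m`
  have hall : ∀ Y : Finset V, (∀ y ∈ Y, G.Adj s y ∧ y ∉ X) → ∃ U : Finset V, U.card < m ∧
      (nbr G U \ X).card ≤ ∑ u ∈ U, (r + (Pi.single s 1 : V → ℕ)) u ∧ s ∉ U ∧ Y ⊆ nbr G U := by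
    intro Y
    induction Y using Finset.induction_on with
    | empty => exact fun _ => ⟨∅, by simpa using (by omega : 0 < m), by simp [nbr], by simp, by simp⟩
    | insert y Y hy ih =>
      intro hY
      obtain ⟨U, hU1, hU2, hU3, hU4⟩ := ih fun z hz => hY z (Finset.mem_insert_of_mem hz)
      obtain ⟨hya, hyX⟩ := hY y (Finset.mem_insert_self _ _)
      obtain ⟨W, hW1, hW2, hW3, hW4⟩ := hbad y hya hyX
      have hcr := critical_union h hU1 hU2 hW2
      refine ⟨U ∪ W, ?_, hcr, by simp [hU3, hW3], ?_⟩
      · by_contra! hmU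
        have hc := Finset.card_union_le U W
        have h4 := hL (U ∪ W) hmU (by omega)
        have h5 := Finset.sum_le_sum fun u (_ : u ∈ U ∪ W) => hr u
        have h6 := Finset.le_card_sdiff X (nbr G (U ∪ W))
        omega
      · rw [nbr_union]
        exact Finset.insert_subset (Finset.mem_union_right _ hW4)
          (hU4.trans Finset.subset_union_left)
  obtain ⟨U, hU1, hU2, hU3, hU4⟩ := hall (G.neighborFinset s \ X) (by simp)
  have h1 := h (insert s U) (by rw [Finset.card_insert_of_notMem hU3]; omega)
  have h2 : nbr G (insert s U) \ X ⊆ nbr G U \ X := by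
    intro v hv
    simp only [nbr, Finset.biUnion_insert, Finset.mem_sdiff, Finset.mem_union] at hv
    rcases hv with ⟨hv | hv, hvX⟩
    · exact Finset.mem_sdiff.2 ⟨hU4 (Finset.mem_sdiff.2 ⟨hv, hvX⟩), hvX⟩
    · exact Finset.mem_sdiff.2 ⟨hv, hvX⟩
  have h3 := Finset.card_le_card h2
  rw [Finset.sum_insert hU3] at h1
  simp only [Pi.add_apply, Pi.single_eq_same] at h1 hU2
  omega

/-- The number of children of `u` in the vertex set `Z` of a forest with parent function `p`. -/
def children (p : V → V) (Z : Finset V) (u : V) : ℕ := (Z.filter fun z => p z = u).card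

/-- Rollback: after a forest on `Z` has been grown from `X`, keeping only the part `P` of `Z`
stays extendable, and the demand spent on the discarded vertices is returned to their parents. The
discarded children of the vertices of `U` are distinct neighbours of `U`, which pays for the
returned demand. -/
lemma rollback {m : ℕ} {X Z P : Finset V} {r : V → ℕ} {p : V → V}
    (h : Extendable G m (X ∪ Z) r) (hd : Disjoint X Z) (hp : ∀ z ∈ Z, G.Adj (p z) z)
    (hP : P ⊆ Z) : Extendable G m (X ∪ P) (fun u => r u + children p (Z \ P) u) := by
  intro U hU
  have h1 := h U hU
  have h2 : ∑ u ∈ U, children p (Z \ P) u ≤ (nbr G U ∩ (Z \ P)).card := by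
    unfold children
    rw [← Finset.card_biUnion]
    · apply Finset.card_le_card
      intro z hz
      simp only [Finset.mem_biUnion, Finset.mem_filter] at hz
      obtain ⟨u, hu, hz, rfl⟩ := hz
      refine Finset.mem_inter.2 ⟨mem_nbr.2 ⟨_, hu, hp z (Finset.mem_sdiff.1 hz).1⟩, hz⟩
    · intro u _ w _ huw
      rw [Function.onFun, Finset.disjoint_left]
      simp only [Finset.mem_filter]
      rintro z ⟨_, rfl⟩ ⟨_, h⟩
      exact huw h
  have h3 : (nbr G U \ (X ∪ Z)).card + (nbr G U ∩ (Z \ P)).card ≤ (nbr G U \ (X ∪ P)).card := by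
    rw [← Finset.card_union_of_disjoint]
    · apply Finset.card_le_card
      intro v hv
      have := fun hx : v ∈ X => Finset.disjoint_left.1 hd hx
      have := @hP v
      simp only [Finset.mem_union, Finset.mem_sdiff, Finset.mem_inter] at hv ⊢
      tauto
    · rw [Finset.disjoint_left]
      intro v
      simp only [Finset.mem_union, Finset.mem_sdiff, Finset.mem_inter]
      tauto
  rw [Finset.sum_add_distrib]
  omega

/-- A forest grown from `X` with initial demand `R`: `Z` is its set of new vertices, `p` gives the
parent of each vertex of `Z`, and `r` is the demand left. -/
structure Grown (G : SimpleGraph V) [DecidableRel G.Adj] (m : ℕ) (X : Finset V) (R : V → ℕ)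
    (Z : Finset V) (p : V → V) (r : V → ℕ) : Prop where
  disj : Disjoint X Z
  adj : ∀ z ∈ Z, G.Adj (p z) z
  ext : Extendable G m (X ∪ Z) r
  count : ∀ u, r u + children p Z u = R u
  fresh : ∀ v, v ∉ X ∪ Z → r v = R v

omit [Fintype V] in
lemma children_congr {p p' : V → V} {Z : Finset V} (h : ∀ z ∈ Z, p' z = p z) (u : V) :
    children p' Z u = children p Z u := by
  unfold children
  congr 1
  apply Finset.filter_congr
  intro z hz
  rw [h z hz]

omit [Fintype V] in
lemma children_insert {p : V → V} {Z : Finset V} {y : V} (hy : y ∉ Z) (u : V) :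
    children p (insert y Z) u = children p Z u + if p y = u then 1 else 0 := by
  unfold children
  rw [Finset.filter_insert]
  split_ifs
  · rw [Finset.card_insert_of_notMem (by simp [hy])]
  · rfl

/-- Grows one leaf for each entry of the multiset `l`, an entry `u` producing a child of `u`. -/
lemma Grown.extend {m N : ℕ} {r₀ R : V → ℕ} {X : Finset V} (hm : 1 ≤ m)
    (hL : LargeExpand G m N r₀) (hR : ∀ u, R u ≤ r₀ u) (l : Multiset V) :
    ∀ {Z p r}, Grown G m X R Z p r → (∀ u, l.count u ≤ r u) → (∀ u ∈ l, u ∈ X ∪ Z) →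
    (X ∪ Z).card + l.card ≤ N →
    ∃ C p' r', Grown G m X R (Z ∪ C) p' r' ∧ Disjoint (X ∪ Z) C ∧ C.card = l.card ∧
      (∀ z ∈ Z, p' z = p z) ∧ (∀ c ∈ C, p' c ∈ l) ∧ ∀ u, r' u + l.count u = r u := by
  induction l using Multiset.induction_on with
  | empty =>
    intro Z p r h _ _ _
    exact ⟨∅, p, r, by simpa using h, by simp, by simp, by simp, by simp, by simp⟩
  | cons s l ih =>
    intro Z p r h hl hmem hN
    obtain ⟨C, p', r', hG, hdis, hcard, hp, hpl, hr⟩ := ih h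
      (fun u => (Multiset.count_le_count_cons u s l).trans (hl u))
      (fun u hu => hmem u (Multiset.mem_cons_of_mem hu)) (by
        rw [Multiset.card_cons] at hN; omega)
    have hs : 1 ≤ r' s := by
      have h1 := hl s
      have h2 := hr s
      rw [Multiset.count_cons_self] at h1
      omega
    set q : V → ℕ := fun u => r' u - (Pi.single s 1 : V → ℕ) u with hq
    have hqr : q + (Pi.single s 1 : V → ℕ) = r' := by
      funext u
      simp only [hq, Pi.add_apply, Pi.single_apply]
      split_ifs with hu
      · subst hu; omega
      · omega
    have hcardu : (X ∪ (Z ∪ C)).card ≤ N := by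
      rw [← Finset.union_assoc, Finset.card_union_of_disjoint hdis, hcard]
      rw [Multiset.card_cons] at hN; omega
    obtain ⟨y, hy1, hy2, hy3⟩ := add_leaf (s := s) (r := q) hm hL hcardu (by
      rw [hqr]; intro u; have := hG.count u; have := hR u; omega) (by rw [hqr]; exact hG.ext)
    have hyX : y ∉ X := fun h => hy2 (Finset.mem_union_left _ h)
    have hyZC : y ∉ Z ∪ C := fun h => hy2 (Finset.mem_union_right _ h)
    have hyZ : y ∉ Z := fun h => hyZC (Finset.mem_union_left _ h)
    have hyC : y ∉ C := fun h => hyZC (Finset.mem_union_right _ h)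
    have hagree : ∀ z ∈ Z ∪ C, Function.update p' y s z = p' z := by
      intro z hz
      rw [Function.update_of_ne]
      rintro rfl; exact hyZC hz
    have hqs : ∀ u, q u + (if s = u then 1 else 0) = r' u := by
      intro u
      rw [← hqr]
      simp [Pi.single_apply, eq_comm]
    refine ⟨insert y C, Function.update p' y s, q, ?_, ?_, ?_, ?_, ?_, ?_⟩
    · rw [Finset.union_insert]
      refine ⟨?_, ?_, ?_, ?_, ?_⟩
      · rw [Finset.disjoint_insert_right]; exact ⟨hyX, hG.disj⟩
      · intro z hz
        rcases Finset.mem_insert.1 hz with rfl | hz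
        · simpa using hy1
        · rw [hagree z hz]; exact hG.adj z hz
      · rw [Finset.union_insert]; exact hy3
      · intro u
        rw [children_insert hyZC, children_congr hagree, Function.update_self]
        have := hG.count u
        have := hqs u
        omega
      · intro v hv
        rw [Finset.union_insert, Finset.mem_insert, not_or] at hv
        have h1 := hG.fresh v hv.2
        have h2 := hqs v
        rw [if_neg] at h2
        · omega
        · rintro rfl
          apply hv.2
          have := hmem s (Multiset.mem_cons_self _ _)
          simp only [Finset.mem_union] at this ⊢
          tauto
    · rw [Finset.disjoint_insert_right]
      refine ⟨?_, hdis⟩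
      simp [hyX, hyZ]
    · rw [Finset.card_insert_of_notMem hyC, Multiset.card_cons, hcard]
    · intro z hz
      rw [hagree z (Finset.mem_union_left _ hz), hp z hz]
    · intro c hc
      rcases Finset.mem_insert.1 hc with rfl | hc
      · simp
      · rw [hagree c (Finset.mem_union_right _ hc)]
        exact Multiset.mem_cons_of_mem (hpl c hc)
    · intro u
      have h1 := hr u
      have h2 := hqs u
      rw [Multiset.count_cons]
      simp only [eq_comm (a := u)]
      omega

omit [Fintype V] in
lemma children_union {p : V → V} {P Q : Finset V} (h : Disjoint P Q) (u : V) :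
    children p (P ∪ Q) u = children p P u + children p Q u := by
  unfold children
  rw [Finset.filter_union, Finset.card_union_of_disjoint]
  exact Finset.disjoint_filter_filter h

/-! ### Connecting two vertices -/

/-- `P ⊆ T` is the vertex set, `a` excluded, of the path from `a` down to `z` in the forest with
parent function `p`; along it each vertex has at most one child, and `z` has none. -/
def IsBranch (G : SimpleGraph V) (T : Finset V) (p : V → V) (k : ℕ) (a z : V) (P : Finset V) :
    Prop :=
  P ⊆ T ∧ P.card ≤ k + 1 ∧ z ∈ P ∧
    (∃ W : G.Walk a z, W.IsPath ∧ ∀ v ∈ W.support, v = a ∨ v ∈ P) ∧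
    ∀ u, children p P u ≤ if (u = a ∨ u ∈ P) ∧ u ≠ z then 1 else 0

/-- Grows below `a ∈ X` one child carrying a complete `D`-ary tree with `D ^ k` bottom vertices,
all of them joined to `a` by a branch. -/
lemma tree {m N D : ℕ} {r₀ R r : V → ℕ} {X Z : Finset V} {p : V → V} {a : V} (hm : 1 ≤ m)
    (hL : LargeExpand G m N r₀) (hR : ∀ u, R u ≤ r₀ u) (hD : 2 ≤ D) (hRD : ∀ v, v ∉ X → R v = D)
    (h : Grown G m X R Z p r) (ha : a ∈ X) (hra : 1 ≤ r a) (k : ℕ) :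
    (X ∪ Z).card + 2 * D ^ k ≤ N →
    ∃ T p' r' L, Grown G m X R (Z ∪ T) p' r' ∧ Disjoint (X ∪ Z) T ∧ (∀ z ∈ Z, p' z = p z) ∧
      (∀ u ∈ X, u ≠ a → r' u = r u) ∧ L ⊆ T ∧ L.card = D ^ k ∧ T.card + 1 ≤ 2 * D ^ k ∧
      (∀ z ∈ L, r' z = D) ∧ ∀ z ∈ L, ∃ P, IsBranch G T p' k a z P := by
  induction k with
  | zero =>
    intro hN
    obtain ⟨C, p', r', hG, hdis, hcard, hp, hpl, hr⟩ := Grown.extend hm hL hR {a} h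
      (by
        intro u
        rw [Multiset.count_singleton]
        split_ifs with hu
        · subst hu; exact hra
        · exact Nat.zero_le _)
      (by simp [ha]) (by rw [pow_zero] at hN; rw [Multiset.card_singleton]; omega)
    refine ⟨C, p', r', C, hG, hdis, hp, ?_, le_rfl, by simpa using hcard, by
      rw [hcard, pow_zero, Multiset.card_singleton]; norm_num,
      ?_, ?_⟩
    · intro u _ hua
      have := hr u
      rwa [Multiset.count_singleton, if_neg hua, add_zero] at this
    · intro z hz
      have hzXZ := Finset.disjoint_right.1 hdis hz
      have hzX : z ∉ X := fun h => hzXZ (Finset.mem_union_left _ h)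
      have hza : z ≠ a := by rintro rfl; exact hzX ha
      have := hr z
      rw [Multiset.count_singleton, if_neg hza, add_zero] at this
      rw [this, h.fresh z hzXZ, hRD z hzX]
    · intro z hz
      have hzXZ := Finset.disjoint_right.1 hdis hz
      have hzX : z ∉ X := fun h => hzXZ (Finset.mem_union_left _ h)
      have hza : a ≠ z := by rintro rfl; exact hzX ha
      have hpz : p' z = a := by simpa using hpl z hz
      have hadj := hG.adj z (Finset.mem_union_right _ hz)
      rw [hpz] at hadj
      refine ⟨{z}, by simpa using hz, by simp, by simp, ⟨Walk.cons hadj Walk.nil, ?_, ?_⟩, ?_⟩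
      · simp [Walk.cons_isPath_iff, hza]
      · intro v hv
        simpa using hv
      · intro u
        unfold children
        rw [Finset.filter_singleton, hpz]
        by_cases hu : a = u
        · subst hu; simp [hza]
        · simp [hu]
  | succ k ih =>
    intro hN
    have hpow : D ^ (k + 1) = D ^ k * D := pow_succ D k
    have hpow2 : 2 * D ^ k ≤ D ^ (k + 1) := by
      rw [hpow, mul_comm]; exact Nat.mul_le_mul_left _ hD
    obtain ⟨T, p', r', L, hG, hdis, hp, hrX, hLT, hLc, hTc, hrL, hpath⟩ := ih (by omega)
    have hcount : ∀ u, (D • L.val).count u = if u ∈ L then D else 0 := by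
      intro u
      rw [Multiset.count_nsmul]
      by_cases hu : u ∈ L
      · rw [if_pos hu, Multiset.count_eq_one_of_mem L.nodup hu]; simp
      · rw [if_neg hu, Multiset.count_eq_zero_of_notMem hu]; simp
    have hmemL : ∀ u, u ∈ D • L.val → u ∈ L := fun u hu => Multiset.mem_of_mem_nsmul hu
    have hcardL : (D • L.val).card = D ^ (k + 1) := by
      rw [Multiset.card_nsmul, hpow, ← hLc, mul_comm]; rfl
    have hXZT : (X ∪ (Z ∪ T)).card = (X ∪ Z).card + T.card := by
      rw [← Finset.union_assoc, Finset.card_union_of_disjoint hdis]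
    obtain ⟨C, p'', r'', hG', hdis', hcard, hp', hpl, hr⟩ :=
      Grown.extend hm hL hR (D • L.val) hG
      (by
        intro u
        rw [hcount]
        split_ifs with hu
        · exact (hrL u hu).ge
        · exact Nat.zero_le _)
      (by
        intro u hu
        have := hLT (hmemL u hu)
        simp [this])
      (by rw [hXZT, hcardL]; omega)
    have hLX : ∀ u ∈ L, u ∉ X := fun u hu hX =>
      Finset.disjoint_left.1 hdis (Finset.mem_union_left _ hX) (hLT hu)
    have hCn : ∀ z ∈ C, z ∉ X ∧ z ∉ Z ∧ z ∉ T := by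
      intro z hz
      have := Finset.disjoint_right.1 hdis' hz
      simpa [not_or] using this
    refine ⟨T ∪ C, p'', r'', C, ?_, ?_, ?_, ?_, Finset.subset_union_right, ?_, ?_, ?_, ?_⟩
    · rw [← Finset.union_assoc]; exact hG'
    · rw [Finset.disjoint_union_right]
      refine ⟨hdis, ?_⟩
      rw [Finset.disjoint_right]
      intro z hz
      have := hCn z hz
      simp [this]
    · intro z hz
      rw [hp' z (Finset.mem_union_left _ hz), hp z hz]
    · intro u hu hua
      have h1 := hr u
      rw [hcount, if_neg (fun h => hLX u h hu), add_zero] at h1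
      rw [h1, hrX u hu hua]
    · rw [hcard, hcardL]
    · have := Finset.card_union_le T C
      omega
    · intro z hz
      obtain ⟨hz1, hz2, hz3⟩ := hCn z hz
      have h1 := hr z
      rw [hcount, if_neg (fun h => hz3 (hLT h)), add_zero] at h1
      rw [h1, hG.fresh z (by simp [hz1, hz2, hz3]), hRD z hz1]
    · intro z hz
      obtain ⟨hz1, hz2, hz3⟩ := hCn z hz
      have hyL := hmemL _ (hpl z hz)
      have hadj := hG'.adj z (Finset.mem_union_right _ hz)
      obtain ⟨P, hPT, hPc, hyP, ⟨W, hW, hWs⟩, hch⟩ := hpath _ hyL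
      have hzP : z ∉ P := fun h => hz3 (hPT h)
      have hza : z ≠ a := by rintro rfl; exact hz1 ha
      refine ⟨insert z P, ?_, ?_, by simp, ⟨W.concat hadj, ?_, ?_⟩, ?_⟩
      · rw [Finset.insert_subset_iff]
        exact ⟨Finset.mem_union_right _ hz, hPT.trans Finset.subset_union_left⟩
      · rw [Finset.card_insert_of_notMem hzP]; omega
      · refine hW.concat ?_ hadj
        intro h
        rcases hWs z h with h | h
        · exact hza h
        · exact hzP h
      · intro v hv
        rw [Walk.support_concat] at hv
        simp only [List.mem_append, List.mem_singleton] at hv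
        rcases hv with hv | rfl
        · rcases hWs v hv with h | h
          · exact Or.inl h
          · exact Or.inr (Finset.mem_insert_of_mem h)
        · exact Or.inr (Finset.mem_insert_self _ _)
      · intro u
        rw [children_insert hzP,
          children_congr (p' := p'') (p := p')
            (fun w hw => hp' w (Finset.mem_union_right _ (hPT hw)))]
        have h1 := hch u
        by_cases huy : p'' z = u
        · subst huy
          have hyz : p'' z ≠ z := hadj.ne
          simp [hyP, hyz] at h1 ⊢
          omega
        · by_cases huz : u = z
          · subst huz
            simp [hza, hzP] at h1
            simp [h1, huy]
          · simp only [huy, if_false, add_zero]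
            refine h1.trans ?_
            simp only [Finset.mem_insert, huz, false_or, ne_eq, not_false_eq_true, and_true]
            split_ifs with h2 h3 <;> first | omega | (exfalso; tauto)

/-- Joins `a, b ∈ X` by a path with at most `2 * (k + 1)` inner vertices, all new: two trees are
grown from `a` and `b`, an edge between their bottom levels closes a path, and everything off this
path is rolled back. Among the vertices of `X` only `a` and `b` lose demand, one unit each, and
new vertices off the path keep demand `D`. -/
lemma connect {m N D k : ℕ} {r₀ R : V → ℕ} {X : Finset V} {a b : V} (hm : 1 ≤ m)
    (hL : LargeExpand G m N r₀) (hR : ∀ u, R u ≤ r₀ u) (hD : 2 ≤ D) (hRD : ∀ v, v ∉ X → R v = D)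
    (hjoin : ∀ A B : Finset V, A.card = D ^ k → B.card = D ^ k → ∃ x ∈ A, ∃ y ∈ B, G.Adj x y)
    (h : Extendable G m X R) (ha : a ∈ X) (hb : b ∈ X) (hab : a ≠ b)
    (hra : 1 ≤ R a) (hrb : 1 ≤ R b) (hN : X.card + 4 * D ^ k ≤ N) :
    ∃ (P : Finset V) (R' : V → ℕ) (W : G.Walk a b), W.IsPath ∧ Disjoint X P ∧
      P.card ≤ 2 * (k + 1) ∧ (∀ v ∈ W.support, v = a ∨ v = b ∨ v ∈ P) ∧
      Extendable G m (X ∪ P) R' ∧ (∀ u, R' u ≤ R u) ∧ (∀ v, v ∉ X ∪ P → R' v = D) ∧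
      ∀ u ∈ X, R u ≤ R' u + if u = a ∨ u = b then 1 else 0 := by
  have h0 : Grown G m X R ∅ id R :=
    ⟨by simp, by simp, by simpa using h, by simp [children], fun _ _ => rfl⟩
  obtain ⟨T₁, p₁, r₁, L₁, hG₁, hdis₁, -, hr₁, hLT₁, hLc₁, hTc₁, -, hpath₁⟩ :=
    tree hm hL hR hD hRD h0 ha hra k (by simp; omega)
  simp only [Finset.empty_union, Finset.union_empty] at hG₁ hdis₁
  obtain ⟨T₂, p₂, r₂, L₂, hG₂, hdis₂, hp₂, -, hLT₂, hLc₂, hTc₂, -, hpath₂⟩ :=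
    tree hm hL hR hD hRD hG₁ hb (by rw [hr₁ b hb hab.symm]; exact hrb) k (by
      rw [Finset.card_union_of_disjoint hdis₁]; omega)
  obtain ⟨x, hx, y, hy, hxy⟩ := hjoin L₁ L₂ hLc₁ hLc₂
  obtain ⟨P₁, hPT₁, hPc₁, hxP, ⟨W₁, hW₁, hWs₁⟩, hch₁⟩ := hpath₁ x hx
  obtain ⟨P₂, hPT₂, hPc₂, hyP, ⟨W₂, hW₂, hWs₂⟩, hch₂⟩ := hpath₂ y hy
  have hX1 : ∀ v ∈ X, v ∉ P₁ := fun v hv hP => Finset.disjoint_left.1 hdis₁ hv (hPT₁ hP)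
  have hX2 : ∀ v ∈ X, v ∉ P₂ := fun v hv hP =>
    Finset.disjoint_left.1 hdis₂ (Finset.mem_union_left _ hv) (hPT₂ hP)
  have h12 : ∀ v ∈ P₁, v ∉ P₂ := fun v hv hP =>
    Finset.disjoint_left.1 hdis₂ (Finset.mem_union_right _ (hPT₁ hv)) (hPT₂ hP)
  have hd12 : Disjoint P₁ P₂ := Finset.disjoint_left.2 h12
  have hsub : P₁ ∪ P₂ ⊆ T₁ ∪ T₂ := Finset.union_subset_union hPT₁ hPT₂
  have hroll := rollback hG₂.ext hG₂.disj hG₂.adj hsub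
  have hsplit : ∀ u, r₂ u + children p₂ ((T₁ ∪ T₂) \ (P₁ ∪ P₂)) u +
      (children p₁ P₁ u + children p₂ P₂ u) = R u := by
    intro u
    have h1 := hG₂.count u
    rw [← children_congr (p := p₁) (p' := p₂) (fun w hw => hp₂ w (hPT₁ hw)),
      ← children_union hd12, add_assoc, ← children_union Finset.sdiff_disjoint,
      Finset.sdiff_union_of_subset hsub]
    exact h1
  refine ⟨P₁ ∪ P₂, _, W₁.append (Walk.cons hxy W₂.reverse), ?_, ?_, ?_, ?_, hroll, ?_, ?_, ?_⟩
  · rw [Walk.isPath_def, Walk.support_append, List.nodup_append]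
    refine ⟨hW₁.support_nodup, ?_, ?_⟩
    · simpa using hW₂.support_nodup
    · intro v hv w hw
      simp only [Walk.support_cons, List.tail_cons, Walk.support_reverse, List.mem_reverse] at hw
      rintro rfl
      rcases hWs₁ v hv with h1 | h1 <;> rcases hWs₂ v hw with h2 | h2
      · exact hab (h1.symm.trans h2)
      · exact hX2 v (h1 ▸ ha) h2
      · exact hX1 v (h2 ▸ hb) h1
      · exact h12 v h1 h2
  · rw [Finset.disjoint_left]
    intro v hv
    simp [hX1 v hv, hX2 v hv]
  · have := Finset.card_union_le P₁ P₂
    omega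
  · intro v hv
    rw [Walk.mem_support_append_iff] at hv
    simp only [Walk.support_cons, Walk.support_reverse, List.mem_reverse, List.mem_cons] at hv
    rcases hv with hv | rfl | hv
    · rcases hWs₁ v hv with h1 | h1 <;> simp [h1]
    · simp [hxP]
    · rcases hWs₂ v hv with h1 | h1 <;> simp [h1]
  · intro u
    have := hsplit u
    omega
  · intro v hv
    simp only [Finset.mem_union, not_or] at hv
    have h1 := hch₁ v
    have h2 := hch₂ v
    have hva : v ≠ a := by rintro rfl; exact hv.1 ha
    have hvb : v ≠ b := by rintro rfl; exact hv.1 hb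
    simp only [hva, hvb, hv.2.1, hv.2.2, or_self, false_and, if_false, Nat.le_zero] at h1 h2
    have := hsplit v
    have := hRD v hv.1
    omega
  · intro u hu
    have h1 := hch₁ u
    have h2 := hch₂ u
    have h3 := hsplit u
    simp only [hX1 u hu, hX2 u hu, or_false] at h1 h2
    by_cases hua : u = a
    · have hub : u ≠ b := by rintro rfl; exact hab hua.symm
      simp only [hub, false_and, if_false] at h2
      have : children p₁ P₁ u ≤ 1 := h1.trans (by split_ifs <;> omega)
      simp only [hua, true_or, if_true] at *
      omega
    · simp only [hua, false_and, if_false] at h1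
      by_cases hub : u = b
      · have : children p₂ P₂ u ≤ 1 := h2.trans (by split_ifs <;> omega)
        simp only [hub, or_true, if_true] at *
        omega
      · simp only [hub, false_and, if_false] at h2
        omega

/-! ### From an extendable branch set to a subdivision -/

/-- The number of pairs of `E` containing `i`. -/
def incident {t : ℕ} (E : Finset (Fin t × Fin t)) (i : Fin t) : ℕ :=
  (E.filter fun e => i = e.1 ∨ i = e.2).card

lemma incident_le {t : ℕ} (E : Finset (Fin t × Fin t)) (hE : ∀ e ∈ E, e.1 < e.2) (i : Fin t) :
    incident E i ≤ t := by
  have h : (E.filter fun e => i = e.1 ∨ i = e.2).card ≤ (Finset.univ : Finset (Fin t)).card := by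
    apply Finset.card_le_card_of_injOn (fun e => if i = e.1 then e.2 else e.1) (by simp)
    intro e he e' he' hee
    simp only [Finset.coe_filter, Set.mem_ofPred_eq] at he he'
    have h1 := hE e he.1
    have h2 := hE e' he'.1
    obtain ⟨x, y⟩ := e
    obtain ⟨x', y'⟩ := e'
    simp only at *
    have := he.2
    have := he'.2
    split_ifs at hee <;> grind
  simpa [incident] using h

lemma incident_insert {t : ℕ} {E : Finset (Fin t × Fin t)} {e : Fin t × Fin t} (he : e ∉ E)
    (i : Fin t) : incident (insert e E) i = incident E i + if i = e.1 ∨ i = e.2 then 1 else 0 := by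
  unfold incident
  rw [Finset.filter_insert]
  split_ifs
  · rw [Finset.card_insert_of_notMem (by simp [he])]
  · rfl

/-- If the image `B` of `φ` is extendable with demand at least `t` at each branch vertex and `D`
elsewhere, the pairs of branch vertices can be joined one after another: a pair uses at most
`2 * (k + 1)` new vertices, so `N` bounds all vertices ever in use. -/
theorem subdivision_of_extendable {m N D k t : ℕ} {r₀ : V → ℕ} (φ : Fin t → V)
    (hφ : Function.Injective φ) (hm : 1 ≤ m) (hL : LargeExpand G m N r₀) (hD : 2 ≤ D)
    (hjoin : ∀ A B : Finset V, A.card = D ^ k → B.card = D ^ k → ∃ x ∈ A, ∃ y ∈ B, G.Adj x y)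
    (hrD : ∀ v, v ∉ Finset.univ.image φ → r₀ v = D) (hrt : ∀ i, t ≤ r₀ (φ i))
    (hext : Extendable G m (Finset.univ.image φ) r₀)
    (hN : t + t * t * (2 * (k + 1)) + 4 * D ^ k ≤ N) : HasCliqueSubdivision G t := by
  set B : Finset V := Finset.univ.image φ with hB
  have hBt : B.card = t := by
    rw [hB, Finset.card_image_of_injective _ hφ]; simp
  have hφB : ∀ i, φ i ∈ B := fun i => Finset.mem_image_of_mem _ (Finset.mem_univ _)
  have key : ∀ E : Finset (Fin t × Fin t), (∀ e ∈ E, e.1 < e.2) →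
      ∃ (X : Finset V) (R : V → ℕ) (P : Fin t × Fin t → Finset V), B ⊆ X ∧
        X.card ≤ t + E.card * (2 * (k + 1)) ∧ Extendable G m X R ∧ (∀ u, R u ≤ r₀ u) ∧
        (∀ v, v ∉ X → R v = D) ∧ (∀ i, t ≤ R (φ i) + incident E i) ∧
        (∀ e ∈ E, P e ⊆ X ∧ Disjoint B (P e) ∧ ∃ W : G.Walk (φ e.1) (φ e.2), W.IsPath ∧
          ∀ v ∈ W.support, v = φ e.1 ∨ v = φ e.2 ∨ v ∈ P e) ∧
        ∀ e ∈ E, ∀ e' ∈ E, e ≠ e' → Disjoint (P e) (P e') := by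
    intro E
    induction E using Finset.induction_on with
    | empty =>
      intro _
      exact ⟨B, r₀, fun _ => ∅, le_rfl, by simp [hBt], hext, fun _ => le_rfl, hrD,
        fun i => (hrt i).trans (Nat.le_add_right _ _), by simp, by simp⟩
    | insert e E he ih =>
      intro hE
      obtain ⟨X, R, P, hBX, hXc, hX, hR, hRD, hRi, hP, hPd⟩ :=
        ih fun e' he' => hE e' (Finset.mem_insert_of_mem he')
      have hlt := hE e (Finset.mem_insert_self _ _)
      have hEt : (insert e E).card ≤ t * t := by
        have := Finset.card_le_univ (insert e E)
        simpa using this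
      rw [Finset.card_insert_of_notMem he] at hEt
      have hmul : (E.card + 1) * (2 * (k + 1)) ≤ t * t * (2 * (k + 1)) :=
        Nat.mul_le_mul_right _ hEt
      have hmul2 : (E.card + 1) * (2 * (k + 1)) = E.card * (2 * (k + 1)) + 2 * (k + 1) := by ring
      have hdem : ∀ i, (i = e.1 ∨ i = e.2) → 1 ≤ R (φ i) := by
        intro i hi
        have h1 := incident_le _ hE i
        rw [incident_insert he, if_pos hi] at h1
        have h2 := hRi i
        omega
      obtain ⟨Q, R', W, hW, hXQ, hQc, hWs, hX', hR', hRD', hRX'⟩ :=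
        connect (a := φ e.1) (b := φ e.2) hm hL hR hD hRD hjoin hX (hBX (hφB _)) (hBX (hφB _))
          (fun h => hlt.ne (hφ h)) (hdem _ (Or.inl rfl)) (hdem _ (Or.inr rfl)) (by omega)
      have hPe : ∀ e' ∈ E, Function.update P e Q e' = P e' := by
        intro e' he'
        rw [Function.update_of_ne]
        rintro rfl; exact he he'
      have hPQ : ∀ e' ∈ E, Disjoint (P e') Q := fun e' he' =>
        Disjoint.mono_left (hP e' he').1 hXQ
      refine ⟨X ∪ Q, R', Function.update P e Q, hBX.trans Finset.subset_union_left, ?_, hX',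
        fun u => (hR' u).trans (hR u), hRD', ?_, ?_, ?_⟩
      · have := Finset.card_union_le X Q
        rw [Finset.card_insert_of_notMem he]
        omega
      · intro i
        have h1 := hRX' (φ i) (hBX (hφB _))
        have h2 := hRi i
        rw [incident_insert he]
        simp only [hφ.eq_iff] at h1
        omega
      · intro e' he'
        rcases Finset.mem_insert.1 he' with rfl | he'
        · rw [Function.update_self]
          exact ⟨Finset.subset_union_right, Disjoint.mono_left hBX hXQ, W, hW, hWs⟩
        · rw [hPe e' he']
          obtain ⟨h1, h2⟩ := hP e' he'
          exact ⟨h1.trans Finset.subset_union_left, h2⟩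
      · intro e₁ h₁ e₂ h₂ hne
        rcases Finset.mem_insert.1 h₁ with rfl | k₁ <;> rcases Finset.mem_insert.1 h₂ with rfl | k₂
        · exact absurd rfl hne
        · rw [Function.update_self, hPe e₂ k₂]; exact (hPQ e₂ k₂).symm
        · rw [Function.update_self, hPe e₁ k₁]; exact hPQ e₁ k₁
        · rw [hPe e₁ k₁, hPe e₂ k₂]; exact hPd e₁ k₁ e₂ k₂ hne
  obtain ⟨X, R, P, -, -, -, -, -, -, hP, hPd⟩ :=
    key (Finset.univ.filter fun e => e.1 < e.2) (by simp)
  have hmem : ∀ i j : Fin t, i < j →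
      (i, j) ∈ (Finset.univ.filter fun e : Fin t × Fin t => e.1 < e.2) := by
    intro i j h
    simpa using h
  choose W hWp hWs using fun (i j : Fin t) (h : i < j) => (hP (i, j) (hmem i j h)).2.2
  have hBP : ∀ (i j : Fin t), i < j → ∀ l, φ l ∉ P (i, j) := fun i j h l hl =>
    Finset.disjoint_left.1 (hP (i, j) (hmem i j h)).2.1 (hφB l) hl
  refine ⟨φ, hφ, W, hWp, ?_, ?_⟩
  · intro i j h l hl
    rcases hWs i j h _ hl with h1 | h1 | h1
    · exact Or.inl (hφ h1)
    · exact Or.inr (hφ h1)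
    · exact absurd h1 (hBP i j h l)
  · intro i j h i' j' h' hne v hv hv'
    have h1 := hWs i j h v hv
    have h2 := hWs i' j' h' v hv'
    have hd := fun hx : v ∈ P (i, j) =>
      Finset.disjoint_left.1 (hPd _ (hmem i j h) _ (hmem i' j' h') hne) hx
    have e1 := hBP i j h
    have e2 := hBP i' j' h'
    simp only at h1 h2
    rcases h1 with rfl | rfl | h1 <;> rcases h2 with h2 | h2 | h2 <;> first
      | exact ⟨by tauto, by tauto⟩
      | exact absurd h2 (e2 _)
      | exact absurd h1 (h2 ▸ e1 _)

/-! ### The expander mixing lemma -/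

/-- The expander mixing lemma: expand the indicator vectors of `A` and `B` in an eigenbasis. As
`L < d`, the all-ones vector, having eigenvalue `d`, is orthogonal to every eigenvector except
the top one `v₀`, so it is a multiple of that one; the other terms are bounded by Cauchy–Schwarz. -/
lemma mixing {n d : ℕ} {lam L : ℝ} (h : IsNDL G n d lam) (hlam : lam ≤ L) (hL0 : 0 ≤ L)
    (hLd : L < d) (A B : Finset V) :
    |(∑ a ∈ A, ((G.neighborFinset a ∩ B).card : ℝ)) - d * A.card * B.card / n| ≤
      L * Real.sqrt (A.card * B.card) := by
  obtain ⟨hn, hreg, hH, v₀, -, hv⟩ := h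
  set b := hH.eigenvectorBasis with hb
  set T := Matrix.toEuclideanLin (G.adjMatrix ℝ) with hT
  have hTb : ∀ v, T (b v) = hH.eigenvalues v • b v := by
    intro v
    have := hH.mulVec_eigenvectorBasis v
    ext w
    have := congrFun this w
    simpa [hT, hb, Matrix.toLpLin_apply] using this
  have hsymm : T.IsSymmetric := Matrix.isSymmetric_toEuclideanLin_iff.2 hH
  let ind : Finset V → EuclideanSpace ℝ V := fun S => WithLp.toLp 2 fun v => if v ∈ S then 1 else 0
  have hinner : ∀ S S' : Finset V, inner ℝ (ind S) (ind S') = ((S ∩ S').card : ℝ) := by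
    intro S S'
    simp [ind, PiLp.inner_apply, Finset.inter_comm, ← Finset.filter_mem_eq_inter]
  have hTind : ∀ S S' : Finset V, inner ℝ (ind S) (T (ind S')) =
      ∑ a ∈ S, ((G.neighborFinset a ∩ S').card : ℝ) := by
    intro S S'
    simp [ind, PiLp.inner_apply, hT, Matrix.mulVec, dotProduct,
      SimpleGraph.adjMatrix_apply]
    refine Finset.sum_congr rfl fun x _ => ?_
    congr 2
    ext y
    simp [and_comm]
  have hone : T (ind Finset.univ) = (d : ℝ) • ind Finset.univ := by
    ext w
    simp [ind, hT, hreg.degree_eq w]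
  have hbone : ∀ v, v ≠ v₀ → inner ℝ (b v) (ind Finset.univ) = 0 := by
    intro v hvv
    have h1 : inner ℝ (T (b v)) (ind Finset.univ) = inner ℝ (b v) (T (ind Finset.univ)) :=
      hsymm _ _
    rw [hTb, hone, inner_smul_left, inner_smul_right] at h1
    have h2 := hv v hvv
    have h3 : hH.eigenvalues v < d := lt_of_le_of_lt (le_abs_self _) (by linarith)
    simp only [conj_trivial] at h1
    by_contra hne
    exact h3.ne (mul_right_cancel₀ hne h1)
  set c := inner ℝ (b v₀) (ind Finset.univ) with hc
  have huniv : ind Finset.univ = c • b v₀ := by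
    rw [← b.sum_repr' (ind Finset.univ), Finset.sum_eq_single v₀]
    · intro v _ hvv
      rw [hbone v hvv, zero_smul]
    · simp
  have hcn : c * c = n := by
    have h1 := hinner Finset.univ Finset.univ
    rw [huniv, inner_smul_left, inner_smul_right, orthonormal_iff_ite.1 b.orthonormal] at h1
    simpa [hn] using h1
  have hnpos : (0 : ℝ) < n := by
    rw [← hn]
    exact_mod_cast Fintype.card_pos_iff.2 ⟨v₀⟩
  have hc0 : c ≠ 0 := by
    intro h0
    rw [h0] at hcn
    linarith
  have hev : hH.eigenvalues v₀ = d := by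
    have h1 : T (ind Finset.univ) = c • T (b v₀) := by rw [huniv, map_smul]
    rw [hone, hTb, huniv, smul_smul, smul_smul] at h1
    have h2 : ((d : ℝ) * c - c * hH.eigenvalues v₀) • b v₀ = 0 := by rw [sub_smul, h1, sub_self]
    have h3 : b v₀ ≠ 0 := b.orthonormal.ne_zero v₀
    have h4 := (smul_eq_zero.1 h2).resolve_right h3
    have h5 : c * ((d : ℝ) - hH.eigenvalues v₀) = 0 := by linarith
    have := (mul_eq_zero.1 h5).resolve_left hc0
    linarith
  have hx : ∀ S : Finset V, c * inner ℝ (ind S) (b v₀) = S.card := by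
    intro S
    have h1 := hinner S Finset.univ
    rw [huniv, inner_smul_right] at h1
    simpa using h1
  have hexp : ∑ a ∈ A, ((G.neighborFinset a ∩ B).card : ℝ) =
      ∑ v, hH.eigenvalues v * (inner ℝ (ind A) (b v) * inner ℝ (ind B) (b v)) := by
    rw [← hTind, ← b.sum_inner_mul_inner]
    apply Finset.sum_congr rfl
    intro v _
    rw [← hsymm, hTb, inner_smul_left, real_inner_comm (b v) (ind B)]
    simp only [conj_trivial]
    ring
  have hmain : (∑ a ∈ A, ((G.neighborFinset a ∩ B).card : ℝ)) - d * A.card * B.card / n =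
      ∑ v ∈ Finset.univ.erase v₀,
        hH.eigenvalues v * (inner ℝ (ind A) (b v) * inner ℝ (ind B) (b v)) := by
    rw [hexp, ← Finset.add_sum_erase _ _ (Finset.mem_univ v₀), hev, ← hx A, ← hx B, ← hcn]
    field_simp
    ring
  have hnorm : ∀ S : Finset V, ∑ v, inner ℝ (ind S) (b v) ^ 2 = (S.card : ℝ) := by
    intro S
    have h1 := b.sum_inner_mul_inner (ind S) (ind S)
    rw [hinner, Finset.inter_self] at h1
    rw [← h1]
    apply Finset.sum_congr rfl
    intro v _
    rw [real_inner_comm (ind S) (b v), sq]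
  rw [hmain]
  calc _ ≤ ∑ v ∈ Finset.univ.erase v₀,
        |hH.eigenvalues v * (inner ℝ (ind A) (b v) * inner ℝ (ind B) (b v))| :=
        Finset.abs_sum_le_sum_abs _ _
    _ ≤ ∑ v ∈ Finset.univ.erase v₀, L * (|inner ℝ (ind A) (b v)| * |inner ℝ (ind B) (b v)|) := by
        apply Finset.sum_le_sum
        intro v hvv
        rw [abs_mul, abs_mul]
        exact mul_le_mul_of_nonneg_right ((hv v (Finset.ne_of_mem_erase hvv)).trans hlam)
          (by positivity)
    _ ≤ ∑ v, L * (|inner ℝ (ind A) (b v)| * |inner ℝ (ind B) (b v)|) :=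
        Finset.sum_le_sum_of_subset_of_nonneg (Finset.erase_subset _ _)
          fun _ _ _ => by positivity
    _ = L * ∑ v, |inner ℝ (ind A) (b v)| * |inner ℝ (ind B) (b v)| := by rw [Finset.mul_sum]
    _ ≤ L * Real.sqrt (A.card * B.card) := by
        apply mul_le_mul_of_nonneg_left _ hL0
        apply Real.le_sqrt_of_sq_le
        have := Finset.sum_mul_sq_le_sq_mul_sq Finset.univ
          (fun v => |inner ℝ (ind A) (b v)|) (fun v => |inner ℝ (ind B) (b v)|)
        simpa only [sq_abs, hnorm] using this

/-! ### Expansion from mixing -/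

/-- The conclusion of the expander mixing lemma with `λ = d / K`. The sum on the left counts the
ordered pairs `(a, b) ∈ A × B` with `a` adjacent to `b`. -/
def Mixes (G : SimpleGraph V) [DecidableRel G.Adj] (n d K : ℝ) : Prop :=
  ∀ A B : Finset V, |(∑ a ∈ A, ((G.neighborFinset a ∩ B).card : ℝ)) - d * A.card * B.card / n| ≤
      d / K * Real.sqrt (A.card * B.card)

lemma Mixes.card_mul_card_le {n d K : ℝ} (h : Mixes G n d K) (hn : 0 < n) (hd : 0 < d) (hK : 0 < K)
    (A B : Finset V) (hAB : ∀ a ∈ A, ∀ b ∈ B, ¬ G.Adj a b) :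
    (A.card : ℝ) * B.card ≤ (n / K) ^ 2 := by
  have h1 := h A B
  have h0 : ∑ a ∈ A, ((G.neighborFinset a ∩ B).card : ℝ) = 0 := by
    apply Finset.sum_eq_zero
    intro a ha
    rw [Nat.cast_eq_zero, Finset.card_eq_zero, Finset.eq_empty_iff_forall_notMem]
    intro b hb
    simp only [Finset.mem_inter, mem_neighborFinset] at hb
    exact hAB a ha b hb.2 hb.1
  rw [h0, zero_sub, abs_neg] at h1
  have h2 := (le_abs_self _).trans h1
  set s := Real.sqrt (A.card * B.card) with hs
  have hs0 : 0 ≤ s := Real.sqrt_nonneg _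
  have hss : s * s = A.card * B.card := Real.mul_self_sqrt (by positivity)
  rw [← hss]
  have h3 : s ≤ n / K := by
    rcases hs0.eq_or_lt with h0 | hpos
    · rw [← h0]; positivity
    · rw [mul_assoc, ← hss] at h2
      have h4 : d / K * s = d * s / n * (n / K) := by field_simp
      have h5 : d * (s * s) / n = d * s / n * s := by ring
      rw [h4, h5] at h2
      exact le_of_mul_le_mul_left h2 (by positivity)
  nlinarith

/-- If every vertex of `A` sends at least `c * d` edges into `B`, then `B` is either linear in `n`
or larger than `A` by a factor of order `K ^ 2`. -/
lemma Mixes.expand {n d K c : ℝ} (h : Mixes G n d K) (hn : 0 < n) (hd : 0 < d) (hK : 0 < K)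
    (hc : 0 < c) (A B : Finset V) (hAB : ∀ a ∈ A, c * d ≤ (G.neighborFinset a ∩ B).card) :
    c * n / 2 ≤ B.card ∨ (c * K / 2) ^ 2 * A.card ≤ B.card := by
  by_contra! hcon
  obtain ⟨hB1, hB2⟩ := hcon
  have h1 := (le_abs_self _).trans (h A B)
  have h0 : c * d * A.card ≤ ∑ a ∈ A, ((G.neighborFinset a ∩ B).card : ℝ) := by
    have := Finset.sum_le_sum hAB
    simpa [mul_comm] using this
  have hA : (0 : ℝ) < A.card := by
    by_contra! hA
    have hA' : (A.card : ℝ) = 0 := le_antisymm hA (by positivity)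
    rw [hA', mul_zero] at hB2
    exact absurd hB2 (not_lt.2 (by positivity))
  have hs : Real.sqrt (A.card * B.card) ≤ c * K / 2 * A.card := by
    apply Real.sqrt_le_iff.2 ⟨by positivity, ?_⟩
    nlinarith
  have h2 : d / K * Real.sqrt (A.card * B.card) ≤ d / K * (c * K / 2 * A.card) :=
    mul_le_mul_of_nonneg_left hs (by positivity)
  have h3 : d / K * (c * K / 2 * A.card) = c * d * A.card / 2 := by field_simp
  have h4 : d * A.card * B.card / n < c * d * A.card / 2 := by
    rw [div_lt_iff₀ hn]
    have : d * A.card * B.card < d * A.card * (c * n / 2) :=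
      mul_lt_mul_of_pos_left hB1 (by positivity)
    linarith
  linarith

lemma card_nbr_le {d : ℕ} (hreg : G.IsRegularOfDegree d) (U : Finset V) :
    (nbr G U).card ≤ U.card * d := by
  apply Finset.card_biUnion_le_card_mul
  intro u _
  rw [card_neighborFinset_eq_degree, hreg.degree_eq]

lemma sum_card_inter {d : ℕ} (hreg : G.IsRegularOfDegree d) (Y : Finset V) :
    ∑ v, (G.neighborFinset v ∩ Y).card = Y.card * d := by
  have h := Finset.sum_card_bipartiteAbove_eq_sum_card_bipartiteBelow (s := Finset.univ) (t := Y)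
    (r := fun v y => G.Adj v y)
  have h1 : ∀ v, Finset.bipartiteAbove (fun v y => G.Adj v y) Y v = G.neighborFinset v ∩ Y := by
    intro v; ext y; simp [Finset.mem_bipartiteAbove, and_comm]
  have h2 : ∀ y, Finset.bipartiteBelow (fun v y => G.Adj v y) Finset.univ y
      = G.neighborFinset y := by
    intro v; ext y; simp [Finset.mem_bipartiteBelow, G.adj_comm]
  simp only [h1, h2, card_neighborFinset_eq_degree, hreg.degree_eq] at h
  simpa using h

/-! ### The branch vertices -/

/-- A greedy choice of `j ≤ d` independent vertices whose neighbourhoods overlap little. Given `B`,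
the next vertex avoids `B`, the neighbourhood of `B`, and the set `Q` of vertices with more than
`η * d / 2` neighbours in `nbr G B`; double counting bounds `Q` by a multiple of `d ^ 2`, hence
these sets do not cover `V`. -/
lemma exists_branch {d : ℕ} {η : ℝ} (hη0 : 0 < η) (hη1 : η < 1 / 2)
    (hreg : G.IsRegularOfDegree d) (hd : 1 ≤ d)
    (hcard : 4 / η * (d : ℝ) ^ 2 < Fintype.card V) (j : ℕ) (hj : j ≤ d) :
    ∃ B : Finset V, B.card = j ∧ (∀ x ∈ B, ∀ y ∈ B, ¬ G.Adj x y) ∧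
      ∀ B' ⊆ B, (1 - η / 2) * d * B'.card ≤ (nbr G B').card := by
  induction j with
  | zero => exact ⟨∅, by simp, by simp, by simp⟩
  | succ j ih =>
    obtain ⟨B, hBj, hind, hexp⟩ := ih (by omega)
    have hd' : (1 : ℝ) ≤ d := by exact_mod_cast hd
    set Q : Finset V := Finset.univ.filter fun v =>
      η / 2 * d < ((G.neighborFinset v ∩ nbr G B).card : ℝ) with hQ
    have hnB : ((nbr G B).card : ℝ) ≤ d ^ 2 - d := by
      have h1 := card_nbr_le hreg B
      have h2 : (nbr G B).card + d ≤ d * d := by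
        have : (B.card + 1) * d ≤ d * d := Nat.mul_le_mul_right _ (by omega)
        linarith
      have h3 : ((nbr G B).card : ℝ) + d ≤ d * d := by exact_mod_cast h2
      nlinarith
    have hQc : (Q.card : ℝ) * (η / 2 * d) ≤ d ^ 2 * d := by
      have h1 : (Q.card : ℝ) * (η / 2 * d) ≤
          ∑ v ∈ Q, ((G.neighborFinset v ∩ nbr G B).card : ℝ) := by
        rw [← nsmul_eq_mul]
        apply Finset.card_nsmul_le_sum
        intro v hv
        exact (Finset.mem_filter.1 hv).2.le
      have h2 : ∑ v ∈ Q, ((G.neighborFinset v ∩ nbr G B).card : ℝ) ≤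
          ∑ v, ((G.neighborFinset v ∩ nbr G B).card : ℝ) :=
        Finset.sum_le_sum_of_subset_of_nonneg (Finset.subset_univ _) fun _ _ _ => by positivity
      have h3 : ∑ v, ((G.neighborFinset v ∩ nbr G B).card : ℝ) = (nbr G B).card * d := by
        exact_mod_cast sum_card_inter hreg (nbr G B)
      nlinarith
    have hQc' : (Q.card : ℝ) ≤ 2 / η * d ^ 2 := by
      rw [div_mul_eq_mul_div, le_div_iff₀ hη0]
      nlinarith
    have hlt : ((B ∪ nbr G B ∪ Q).card : ℝ) < Fintype.card V := by
      have h1 : (B ∪ nbr G B ∪ Q).card ≤ B.card + (nbr G B).card + Q.card :=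
        (Finset.card_union_le _ _).trans (Nat.add_le_add_right (Finset.card_union_le _ _) _)
      have h2 : ((B ∪ nbr G B ∪ Q).card : ℝ) ≤ B.card + (nbr G B).card + Q.card := by
        exact_mod_cast h1
      have h3 : (B.card : ℝ) ≤ d := by exact_mod_cast (by omega : B.card ≤ d)
      have h4 : (d : ℝ) ^ 2 ≤ 2 / η * d ^ 2 := by
        have : 1 ≤ 2 / η := by rw [le_div_iff₀ hη0]; linarith
        nlinarith [sq_nonneg (d : ℝ)]
      have h5 : 4 / η * (d : ℝ) ^ 2 = 2 / η * d ^ 2 + 2 / η * d ^ 2 := by ring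
      linarith
    obtain ⟨v, hv⟩ : ∃ v, v ∉ B ∪ nbr G B ∪ Q := by
      by_contra! hall
      rw [Finset.eq_univ_of_forall hall, Finset.card_univ] at hlt
      exact lt_irrefl _ hlt
    simp only [Finset.mem_union, not_or] at hv
    obtain ⟨⟨hvB, hvN⟩, hvQ⟩ := hv
    have hvQ' : ((G.neighborFinset v ∩ nbr G B).card : ℝ) ≤ η / 2 * d := by
      simpa [hQ] using hvQ
    have hvd : (1 - η / 2) * d ≤ ((G.neighborFinset v \ nbr G B).card : ℝ) := by
      have h1 := Finset.card_sdiff_add_card_inter (G.neighborFinset v) (nbr G B)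
      rw [card_neighborFinset_eq_degree, hreg.degree_eq] at h1
      have h2 : ((G.neighborFinset v \ nbr G B).card : ℝ) +
        (G.neighborFinset v ∩ nbr G B).card = d := by exact_mod_cast h1
      linarith
    have hvadj : ∀ x ∈ B, ¬ G.Adj x v := fun x hx h => hvN (mem_nbr.2 ⟨x, hx, h⟩)
    refine ⟨insert v B, by rw [Finset.card_insert_of_notMem hvB, hBj], ?_, ?_⟩
    · intro x hx y hy
      rcases Finset.mem_insert.1 hx with rfl | k₁ <;> rcases Finset.mem_insert.1 hy with rfl | k₂
      · exact G.loopless.irrefl _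
      · exact fun h => hvadj y k₂ h.symm
      · exact hvadj x k₁
      · exact hind x k₁ y k₂
    · intro B' hB'
      by_cases hvB' : v ∈ B'
      · have hsub : B'.erase v ⊆ B := by
          intro x hx
          obtain ⟨h1, h2⟩ := Finset.mem_erase.1 hx
          exact (Finset.mem_insert.1 (hB' h2)).resolve_left h1
        have h1 := hexp _ hsub
        have h2 : (nbr G (B'.erase v)).card + (G.neighborFinset v \ nbr G B).card ≤
            (nbr G B').card := by
          rw [← Finset.card_union_of_disjoint]
          · apply Finset.card_le_card
            apply Finset.union_subset (nbr_mono (Finset.erase_subset _ _))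
            intro y hy
            exact mem_nbr.2 ⟨v, hvB', by simpa using (Finset.mem_sdiff.1 hy).1⟩
          · exact Finset.disjoint_sdiff.mono_left (nbr_mono hsub)
        have h3 : ((nbr G (B'.erase v)).card : ℝ) + (G.neighborFinset v \ nbr G B).card ≤
            (nbr G B').card := by exact_mod_cast h2
        have h4 : (B'.card : ℝ) = (B'.erase v).card + 1 := by
          exact_mod_cast (Finset.card_erase_add_one hvB').symm
        rw [h4]
        linarith
      · exact hexp B' ((Finset.subset_insert_iff_of_notMem hvB').1 hB')

/-! ### Verifying the hypotheses -/

omit [Fintype V] in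
lemma sum_demand (B U : Finset V) (t D : ℕ) :
    ∑ u ∈ U, (if u ∈ B then t else D) = (U ∩ B).card * t + (U \ B).card * D := by
  rw [Finset.sum_ite, Finset.sum_const, Finset.sum_const, Finset.filter_mem_eq_inter,
    Finset.filter_notMem_eq_sdiff, smul_eq_mul, smul_eq_mul]

/-- A set of at least `m` vertices has no edge to the complement of its neighbourhood, hence its
neighbourhood misses at most `n / 4` vertices, while demand and used vertices take about `n / 4`. -/
lemma Mixes.largeExpand {n d t m D N : ℕ} {η K : ℝ} (hη0 : 0 < η) (hη1 : η < 1 / 2)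
    (hn : Fintype.card V = n) (hd : 1 ≤ d) (hmix : Mixes G n d K)
    (hK : 32 / η ^ 2 ≤ K) (htd : (t : ℝ) ≤ d) (hD : (D : ℝ) ≤ η * K / 100)
    (hdn : 100 * (d : ℝ) ^ 2 ≤ n) (hm : 1 ≤ m) (hm1 : η * n / (8 * K) ≤ m)
    (hm2 : m ≤ η * n / (4 * K)) (hN4 : (N : ℝ) ≤ n / 4) {B : Finset V} (hBt : B.card = t) :
    LargeExpand G m N (fun u => if u ∈ B then t else D) := by
  have hd' : (1 : ℝ) ≤ d := by exact_mod_cast hd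
  have hm' : (0 : ℝ) < m := by exact_mod_cast hm
  have hK0 : 0 < K := lt_of_lt_of_le (by positivity) hK
  have hK2 : 32 ≤ η ^ 2 * K := by
    rw [div_le_iff₀ (by positivity)] at hK; linarith
  have hK1 : 32 ≤ η * K := by
    have h1 : η * (η * K) ≤ 1 * (η * K) :=
      mul_le_mul_of_nonneg_right (by linarith) (by positivity)
    have h2 : η ^ 2 * K = η * (η * K) := by ring
    linarith
  have hn0 : (0 : ℝ) < n := lt_of_lt_of_le (by positivity) hdn
  have hm2' : 4 * K * m ≤ η * n := by
    rw [le_div_iff₀ (by positivity)] at hm2; linarith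
  have hm1' : η * n ≤ 8 * K * m := by
    rw [div_le_iff₀ (by positivity)] at hm1; linarith
  intro U hU1 hU2
  have hno := hmix.card_mul_card_le hn0 (by linarith) hK0 U (nbr G U)ᶜ (by
    intro a ha b hb hab
    exact Finset.mem_compl.1 hb (mem_nbr.2 ⟨a, ha, hab⟩))
  have h1 : ((nbr G U).card : ℝ) + ((nbr G U)ᶜ.card : ℝ) = n := by
    rw [← hn]; exact_mod_cast Finset.card_add_card_compl (nbr G U)
  have h2 : (m : ℝ) ≤ U.card := by exact_mod_cast hU1
  generalize ((nbr G U)ᶜ.card : ℝ) = c at h1 hno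
  have h3 : c ≤ n / 4 := by
    by_contra! hcon
    have h5 : (m : ℝ) * (n / 4) < (n / K) ^ 2 := by
      refine lt_of_lt_of_le ?_ hno
      exact lt_of_lt_of_le (mul_lt_mul_of_pos_left hcon hm')
        (mul_le_mul_of_nonneg_right h2 (by linarith))
    rw [div_pow, lt_div_iff₀ (by positivity)] at h5
    have h7 : (m : ℝ) * K ^ 2 < 4 * n := by
      have h8 : n * ((m : ℝ) * K ^ 2) < n * (4 * n) := by linarith
      exact lt_of_mul_lt_mul_left h8 hn0.le
    have h8 : η * n * K ≤ 8 * K * m * K := mul_le_mul_of_nonneg_right hm1' hK0.le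
    have h9 : 32 * (n : ℝ) ≤ η * K * n := mul_le_mul_of_nonneg_right hK1 hn0.le
    have h10 : 8 * K * m * K = 8 * (m * K ^ 2) := by ring
    have h11 : η * n * K = η * K * n := by ring
    linarith
  have h9 : (∑ u ∈ U, if u ∈ B then t else D) ≤ t * t + 2 * m * D := by
    rw [sum_demand]
    have ha : (U ∩ B).card ≤ t := hBt ▸ Finset.card_le_card Finset.inter_subset_right
    have hb : (U \ B).card ≤ 2 * m := (Finset.card_le_card Finset.sdiff_subset).trans hU2
    exact Nat.add_le_add (Nat.mul_le_mul_right _ ha) (Nat.mul_le_mul_right _ hb)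
  have h10 : ((∑ u ∈ U, if u ∈ B then t else D : ℕ) : ℝ) ≤ t * t + 2 * m * D := by
    exact_mod_cast h9
  have h11 : (t : ℝ) * t ≤ n / 100 := by
    have : (t : ℝ) * t ≤ d * d := mul_le_mul htd htd (by positivity) (by positivity)
    linarith
  have h12 : 2 * (m : ℝ) * D ≤ n / 100 := by
    have ha : (m : ℝ) * D ≤ m * (η * K / 100) := mul_le_mul_of_nonneg_left hD hm'.le
    have hb : η * (4 * K * m) ≤ η * (η * n) := mul_le_mul_of_nonneg_left hm2' hη0.le
    have hc : η * (η * n) ≤ 1 * n := by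
      rw [← mul_assoc]; exact mul_le_mul_of_nonneg_right (by nlinarith) hn0.le
    linarith
  have : ((∑ u ∈ U, (if u ∈ B then t else D) + N : ℕ) : ℝ) < ((nbr G U).card : ℝ) := by
    rw [Nat.cast_add]
    linarith
  exact_mod_cast this

/-- The demand of `U ∩ B` is met by the nearly disjoint neighbourhoods of the branch vertices, with
slack `η / 2 * d` per vertex. A vertex outside `B` has at least `η * d` neighbours outside `B`, as
`B` has at most `(1 - η) * d` vertices, so `U \ B` has at least `K` unused neighbours per vertex;
when its demand exceeds the slack, these suffice for all of `U`. -/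
lemma Mixes.extendable {n d t m D : ℕ} {η K : ℝ} (hη0 : 0 < η) (hη1 : η < 1 / 2)
    (hreg : G.IsRegularOfDegree d) (hd : 1 ≤ d) (hmix : Mixes G n d K)
    (hn0 : (0 : ℝ) < n) (hK : 32 / η ^ 2 ≤ K) (ht : (t : ℝ) ≤ (1 - η) * d)
    (hD : (D : ℝ) ≤ η * K / 100) (hm2 : m ≤ η * n / (4 * K))
    {B : Finset V} (hBt : B.card = t) (hind : ∀ x ∈ B, ∀ y ∈ B, ¬ G.Adj x y)
    (hexp : ∀ B' ⊆ B, (1 - η / 2) * d * B'.card ≤ (nbr G B').card) :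
    Extendable G m B (fun u => if u ∈ B then t else D) := by
  have hd' : (1 : ℝ) ≤ d := by exact_mod_cast hd
  have hK0 : 0 < K := lt_of_lt_of_le (by positivity) hK
  have hK2 : 32 ≤ η ^ 2 * K := by
    rw [div_le_iff₀ (by positivity)] at hK; linarith
  have hm2' : 4 * K * m ≤ η * n := by
    rw [le_div_iff₀ (by positivity)] at hm2; linarith
  intro U hU
  rw [sum_demand]
  have hB1 : (1 - η / 2) * d * (U ∩ B).card ≤ ((nbr G U \ B).card : ℝ) := by
    refine (hexp _ Finset.inter_subset_right).trans ?_
    have hsub : nbr G (U ∩ B) ⊆ nbr G U \ B := by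
      intro y hy
      obtain ⟨x, hx, hxy⟩ := mem_nbr.1 hy
      refine Finset.mem_sdiff.2 ⟨nbr_mono Finset.inter_subset_left hy, fun hyB => ?_⟩
      exact hind x (Finset.mem_inter.1 hx).2 y hyB hxy
    exact Nat.cast_le.2 (Finset.card_le_card hsub)
  have hW : ((U \ B).card : ℝ) ≤ 2 * m := by
    exact_mod_cast (Finset.card_le_card Finset.sdiff_subset).trans hU
  have hW1 : K * ((U \ B).card : ℝ) ≤ ((nbr G U \ B).card : ℝ) := by
    rcases hmix.expand hn0 (by linarith) hK0 hη0 (U \ B) (nbr G U \ B) (by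
      intro a ha
      have hsub : G.neighborFinset a \ B ⊆ G.neighborFinset a ∩ (nbr G U \ B) := by
        intro y hy
        simp only [Finset.mem_sdiff, Finset.mem_inter, mem_neighborFinset] at hy ⊢
        exact ⟨hy.1, mem_nbr.2 ⟨a, (Finset.mem_sdiff.1 ha).1, hy.1⟩, hy.2⟩
      have h1 := Finset.card_le_card hsub
      have h2 := Finset.le_card_sdiff B (G.neighborFinset a)
      rw [card_neighborFinset_eq_degree, hreg.degree_eq, hBt] at h2
      have h3 : d ≤ (G.neighborFinset a ∩ (nbr G U \ B)).card + t := by omega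
      have h4 : (d : ℝ) ≤ (G.neighborFinset a ∩ (nbr G U \ B)).card + t := by exact_mod_cast h3
      linarith) with h | h
    · refine le_trans ?_ h
      have := mul_le_mul_of_nonneg_left hW hK0.le
      linarith
    · refine le_trans ?_ h
      apply mul_le_mul_of_nonneg_right _ (Nat.cast_nonneg _)
      have h5 : (η * K / 2) ^ 2 = η ^ 2 * K * K / 4 := by ring
      have h6 : 32 * K ≤ η ^ 2 * K * K := mul_le_mul_of_nonneg_right hK2 hK0.le
      linarith
  have hgoal : ((U ∩ B).card : ℝ) * t + (U \ B).card * D ≤ ((nbr G U \ B).card : ℝ) := by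
    have hb0 : (0 : ℝ) ≤ (U ∩ B).card := Nat.cast_nonneg _
    have hw0 : (0 : ℝ) ≤ (U \ B).card := Nat.cast_nonneg _
    generalize ((U ∩ B).card : ℝ) = b at *
    generalize ((U \ B).card : ℝ) = w at *
    generalize ((nbr G U \ B).card : ℝ) = c at *
    have hbt : b * t ≤ b * ((1 - η) * d) := mul_le_mul_of_nonneg_left ht hb0
    have hwD : w * D ≤ w * (η * K / 100) := mul_le_mul_of_nonneg_left hD hw0
    have hdb : 0 ≤ d * b := by positivity
    have hwK : 0 ≤ w * K := by positivity
    have h6 : 0 ≤ η * (d * b) := by positivity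
    -- either the vertices outside `B` contribute little to the demand, or they expand enough
    by_cases hcase : w * D ≤ η / 2 * d * b
    · linarith
    · push Not at hcase
      have h1 : η * (d * b) ≤ η * (w * K / 50) := by linarith
      have h2 := le_of_mul_le_mul_left h1 hη0
      have h4 : η * (w * K) ≤ 1 * (w * K) := mul_le_mul_of_nonneg_right (by linarith) hwK
      linarith
  exact_mod_cast hgoal

/-- The construction with its parameters still free: `t` branch vertices of demand `t`, demand `D`
elsewhere, trees of depth `k`, and extendability for sets of at most `2 * m` vertices. -/
theorem subdivision_of_mixes {n d t m D k N : ℕ} {η K : ℝ} (hη0 : 0 < η) (hη1 : η < 1 / 2)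
    (hn : Fintype.card V = n) (hreg : G.IsRegularOfDegree d) (hd : 1 ≤ d) (hmix : Mixes G n d K)
    (hK : 32 / η ^ 2 ≤ K) (ht : (t : ℝ) ≤ (1 - η) * d) (hD2 : 2 ≤ D) (hD : (D : ℝ) ≤ η * K / 100)
    (hdn : 100 / η * (d : ℝ) ^ 2 ≤ n)
    (hm : 1 ≤ m) (hm1 : η * n / (8 * K) ≤ m) (hm2 : m ≤ η * n / (4 * K))
    (hk : (n : ℝ) / K < (D : ℝ) ^ k) (hN4 : (N : ℝ) ≤ n / 4)
    (hN : t + t * t * (2 * (k + 1)) + 4 * D ^ k ≤ N) : HasCliqueSubdivision G t := by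
  have hd' : (1 : ℝ) ≤ d := by exact_mod_cast hd
  have hd0 : (0 : ℝ) < (d : ℝ) ^ 2 := by positivity
  have hK0 : 0 < K := lt_of_lt_of_le (by positivity) hK
  have hn0 : (0 : ℝ) < n := lt_of_lt_of_le (by positivity) hdn
  have hdn' : 100 * (d : ℝ) ^ 2 ≤ n := by
    refine le_trans (mul_le_mul_of_nonneg_right ?_ hd0.le) hdn
    rw [le_div_iff₀ hη0]; linarith
  have htd : (t : ℝ) ≤ d := by nlinarith
  have htd' : t ≤ d := by exact_mod_cast htd
  obtain ⟨B, hBt, hind, hexp⟩ := exists_branch hη0 hη1 hreg hd (by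
    rw [hn]
    refine lt_of_lt_of_le ?_ hdn
    have : 4 / η < 100 / η := div_lt_div_of_pos_right (by norm_num) hη0
    exact mul_lt_mul_of_pos_right this hd0) t htd'
  let e := B.equivFinOfCardEq hBt
  let φ : Fin t → V := fun i => (e.symm i : V)
  have hφB : ∀ i, φ i ∈ B := fun i => (e.symm i).2
  have hφ : Function.Injective φ := fun i j h => e.symm.injective (Subtype.ext h)
  have himg : Finset.univ.image φ = B := by
    ext v
    simp only [Finset.mem_image, Finset.mem_univ, true_and]
    constructor
    · rintro ⟨i, rfl⟩; exact hφB i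
    · intro hv; exact ⟨e ⟨v, hv⟩, by simp [φ]⟩
  refine subdivision_of_extendable (m := m) (N := N) (D := D) (k := k)
    (r₀ := fun u => if u ∈ B then t else D) φ hφ hm
    (hmix.largeExpand hη0 hη1 hn hd hK htd hD hdn' hm hm1 hm2 hN4 hBt) hD2 ?_ ?_ ?_ ?_ hN
  · intro A A' hA hA'
    by_contra! hcon
    have h1 := hmix.card_mul_card_le hn0 (by linarith) hK0 A A' hcon
    rw [hA, hA', Nat.cast_pow, ← sq] at h1
    have h2 : (0 : ℝ) ≤ n / K := by positivity
    exact absurd (pow_lt_pow_left₀ hk h2 two_ne_zero) (not_lt.2 h1)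
  · intro v hv
    rw [himg] at hv
    simp [hv]
  · intro i
    simp [hφB i]
  · rw [himg]
    exact hmix.extendable hη0 hη1 hreg hd hn0 hK ht hD hm2 hBt hind hexp

/-! ### The choice of parameters -/

lemma sq_le_two_mul_two_pow (e : ℕ) : e ^ 2 ≤ 2 * 2 ^ e := by
  induction e with
  | zero => norm_num
  | succ e ih =>
    by_cases he : e < 3
    · interval_cases e <;> norm_num
    · rw [pow_succ 2 e]
      nlinarith

lemma thirtytwo_mul_le {e : ℕ} {s : ℝ} (hs : 2048 ≤ s) (he : (2 : ℝ) ^ e ≤ s) : 32 * (e : ℝ) ≤ s := by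
  have h1 : ((e : ℝ)) ^ 2 ≤ 2 * 2 ^ e := by exact_mod_cast sq_le_two_mul_two_pow e
  by_contra! hcon
  have h2 : (e : ℝ) * e < 64 * e := by nlinarith
  have h3 : (e : ℝ) < 64 := lt_of_mul_lt_mul_right h2 (Nat.cast_nonneg _)
  linarith

/-- Here `D` is of order `η * K`, and `m` of order `η * n / K`. Writing `n = d ^ 2 * s`, the tree
depth is `O(1 / η) + log s`, since `D ^ (4 * q) ≥ d ^ 2`; all the paths together then have at
most `n / 8` vertices, as `log s` is small against `s`. -/
lemma subdivision_of_mixes_of_large {n d : ℕ} {η K : ℝ} (hη0 : 0 < η) (hη1 : η < 1 / 2)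
    (hn : Fintype.card V = n) (hreg : G.IsRegularOfDegree d) (hd : 1 ≤ d) (hmix : Mixes G n d K)
    (hK : 10 ^ 6 / η ^ 2 ≤ K) (hKd : K ≤ d) {q : ℕ} (hq : (d : ℝ) ≤ K ^ q) (hq2 : (q : ℝ) ≤ 2 / η)
    (hnd : 2048 / η * (d : ℝ) ^ 2 ≤ n) : HasCliqueSubdivision G ⌊(1 - η) * (d : ℝ)⌋₊ := by
  have hd' : (1 : ℝ) ≤ d := by exact_mod_cast hd
  have hdd : (1 : ℝ) ≤ (d : ℝ) ^ 2 := one_le_pow₀ hd'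
  have hd0 : (0 : ℝ) < (d : ℝ) ^ 2 := by positivity
  have hK0 : 0 < K := lt_of_lt_of_le (by positivity) hK
  have hη2 : 2 ≤ 1 / η := by rw [le_div_iff₀ hη0]; linarith
  have hK2 : 10 ^ 6 ≤ η ^ 2 * K := by
    rw [div_le_iff₀ (by positivity)] at hK; linarith
  have hK1 : 10 ^ 6 ≤ η * K := by
    have h1 : η * (η * K) ≤ 1 * (η * K) :=
      mul_le_mul_of_nonneg_right (by linarith) (by positivity)
    have h2 : η ^ 2 * K = η * (η * K) := by ring
    linarith
  have hK3 : 1 ≤ K := by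
    have h1 : η * K ≤ 1 * K := mul_le_mul_of_nonneg_right (by linarith) hK0.le
    linarith
  have hdn1 : 2048 * (1 / η) * (d : ℝ) ^ 2 ≤ n := by
    have : 2048 / η = 2048 * (1 / η) := by ring
    rwa [this] at hnd
  have hn0 : (0 : ℝ) < n := lt_of_lt_of_le (by positivity) hdn1
  obtain ⟨s, hs⟩ : ∃ s : ℝ, (n : ℝ) = d ^ 2 * s := ⟨n / d ^ 2, by field_simp⟩
  have hs1 : 2048 * (1 / η) ≤ s := by
    rw [hs, mul_comm] at hdn1
    exact le_of_mul_le_mul_left hdn1 hd0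
  have hs2 : 4096 ≤ s := by linarith
  have hηn : 2048 * (d : ℝ) ^ 2 ≤ η * n := by
    have := mul_le_mul_of_nonneg_left hdn1 hη0.le
    have h2 : η * (2048 * (1 / η) * (d : ℝ) ^ 2) = 2048 * (d : ℝ) ^ 2 := by field_simp
    linarith
  have hd2 : (d : ℝ) ≤ d ^ 2 := by nlinarith
  have hdn : 4096 * (d : ℝ) ^ 2 ≤ n := by
    rw [hs, mul_comm]; exact mul_le_mul_of_nonneg_left hs2 hd0.le
  have hKn : K ≤ n := by linarith
  set t := ⌊(1 - η) * (d : ℝ)⌋₊ with ht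
  have ht1 : (t : ℝ) ≤ (1 - η) * d := Nat.floor_le (mul_nonneg (by linarith) (by linarith))
  have htd : (t : ℝ) ≤ d := by
    have : 0 ≤ η * d := by positivity
    linarith
  set D := ⌊η * K / 100⌋₊ with hD
  have hD1 : (D : ℝ) ≤ η * K / 100 := Nat.floor_le (by positivity)
  have hD3 : η * K / 200 ≤ D := by
    have := Nat.lt_floor_add_one (η * K / 100)
    linarith
  have hD2 : 2 ≤ D := by
    have : (2 : ℝ) ≤ D := by linarith
    exact_mod_cast this
  have hD2' : (2 : ℝ) ≤ D := by exact_mod_cast hD2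
  have hDK : K ≤ (D : ℝ) ^ 2 := by
    have h1 : (η * K / 200) ^ 2 ≤ (D : ℝ) ^ 2 := by gcongr
    have h2 : (η * K / 200) ^ 2 = η ^ 2 * K * K / 40000 := by ring
    have h3 : 10 ^ 6 * K ≤ η ^ 2 * K * K := mul_le_mul_of_nonneg_right hK2 hK0.le
    linarith
  have hDd : (d : ℝ) ^ 2 ≤ (D : ℝ) ^ (4 * q) := by
    have h1 : (d : ℝ) ≤ ((D : ℝ) ^ 2) ^ q := hq.trans (by gcongr)
    calc (d : ℝ) ^ 2 ≤ (((D : ℝ) ^ 2) ^ q) ^ 2 := by gcongr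
      _ = (D : ℝ) ^ (4 * q) := by rw [← pow_mul, ← pow_mul]; congr 1; ring
  set m := ⌊η * n / (4 * K)⌋₊ with hm
  have hm2 : (m : ℝ) ≤ η * n / (4 * K) := Nat.floor_le (by positivity)
  have hm0 : 1 ≤ η * n / (8 * K) := by
    rw [le_div_iff₀ (by positivity)]
    linarith
  have hm4 : η * n / (4 * K) = 2 * (η * n / (8 * K)) := by field_simp; norm_num
  have hm1 : η * n / (8 * K) ≤ m := by
    have := Nat.lt_floor_add_one (η * n / (4 * K))
    linarith
  have hm3 : 1 ≤ m := by
    have : (1 : ℝ) ≤ m := by linarith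
    exact_mod_cast this
  -- the depth of the trees is the least `k` for which `D ^ k` exceeds `n / K`
  have hex : ∃ k : ℕ, (n : ℝ) / K < (D : ℝ) ^ k := pow_unbounded_of_one_lt _ (by linarith)
  classical
  set k := Nat.find hex with hk
  have hk1 : (n : ℝ) / K < (D : ℝ) ^ k := Nat.find_spec hex
  have hk0 : k ≠ 0 := by
    intro h0
    rw [h0, pow_zero, div_lt_one hK0] at hk1
    linarith
  obtain ⟨j, hj⟩ := Nat.exists_eq_succ_of_ne_zero hk0
  have hj1 : (D : ℝ) ^ j ≤ n / K := not_lt.1 (Nat.find_min hex (by omega))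
  have hDk : 4 * (D : ℝ) ^ k ≤ n / 25 := by
    rw [hj, Nat.succ_eq_add_one, pow_succ]
    have h1 : (D : ℝ) ^ j * D ≤ n / K * (η * K / 100) := by gcongr
    have h2 : n / K * (η * K / 100) = η * n / 100 := by field_simp
    have h3 : η * n ≤ 1 * n := mul_le_mul_of_nonneg_right (by linarith) hn0.le
    linarith
  obtain ⟨e, he1, he2⟩ : ∃ e : ℕ, j ≤ 4 * q + e ∧ (2 : ℝ) ^ e ≤ s := by
    refine ⟨j - 4 * q, by omega, ?_⟩
    by_cases hjq : j ≤ 4 * q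
    · rw [Nat.sub_eq_zero_of_le hjq, pow_zero]; linarith
    · have h1 : (D : ℝ) ^ j = (D : ℝ) ^ (4 * q) * (D : ℝ) ^ (j - 4 * q) := by
        rw [← pow_add]; congr 1; omega
      have h2 : (D : ℝ) ^ j ≤ n := hj1.trans (div_le_self hn0.le hK3)
      rw [h1, hs] at h2
      have h3 : (d : ℝ) ^ 2 * (D : ℝ) ^ (j - 4 * q) ≤ (d : ℝ) ^ 2 * s :=
        (mul_le_mul_of_nonneg_right hDd (by positivity)).trans h2
      exact (by gcongr : (2 : ℝ) ^ (j - 4 * q) ≤ (D : ℝ) ^ (j - 4 * q)).trans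
        (le_of_mul_le_mul_left h3 hd0)
  have hes := thirtytwo_mul_le (by linarith) he2
  have hk2 : 16 * ((k : ℝ) + 1) ≤ s := by
    have h1 : (k : ℝ) ≤ 4 * q + e + 1 := by
      have : k ≤ 4 * q + e + 1 := by omega
      exact_mod_cast this
    have h2 : 2 / η = 2 * (1 / η) := by ring
    linarith
  -- at most `t ^ 2` paths with at most `2 * (k + 1)` inner vertices each
  have htt : (t : ℝ) * t * (2 * (k + 1)) ≤ n / 8 := by
    have h1 : (t : ℝ) * t ≤ d * d := mul_le_mul htd htd (by positivity) (by positivity)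
    have h2 : (t : ℝ) * t * (2 * (k + 1)) ≤ d * d * (2 * (k + 1)) :=
      mul_le_mul_of_nonneg_right h1 (by positivity)
    have h3 : (d : ℝ) * d * (2 * (k + 1)) ≤ d * d * (s / 8) :=
      mul_le_mul_of_nonneg_left (by linarith) (by positivity)
    rw [hs]
    linarith
  have hN : t + t * t * (2 * (k + 1)) + 4 * D ^ k ≤ n / 4 := by
    rw [Nat.le_div_iff_mul_le (by norm_num)]
    have : (((t + t * t * (2 * (k + 1)) + 4 * D ^ k) * 4 : ℕ) : ℝ) ≤ n := by
      push_cast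
      linarith
    exact_mod_cast this
  refine subdivision_of_mixes hη0 hη1 hn hreg hd hmix ?_ ht1 hD2 hD1 ?_ hm3 hm1 hm2 hk1
    Nat.cast_div_le hN
  · refine le_trans ?_ hK
    gcongr
    norm_num
  · refine le_trans ?_ hnd
    gcongr
    norm_num

end Subdiv

/-- subdivisions in (n,d,λ)-graphs with λ < d^{1-η}. -/
theorem clique_subdivision_in_ndl_graphs (η : ℝ) (hη0 : 0 < η) (hη1 : η < 1 / 2) :
    ∃ ε : ℝ, 0 < ε ∧
      ∀ (n d : ℕ) (lam : ℝ) (V : Type) [Fintype V] [DecidableEq V]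
        (G : SimpleGraph V) [DecidableRel G.Adj],
        IsNDL G n d lam →
        1 / ε < (d : ℝ) → (d : ℝ) < ε * Real.sqrt (n : ℝ) →
        lam < (d : ℝ) ^ ((1 : ℝ) - η) →
        HasCliqueSubdivision G ⌊(1 - η) * (d : ℝ)⌋₊ := by
  -- `ε` is chosen so that `1 / ε < d` gives `d ^ η > K₀`
  set K₀ : ℝ := 10 ^ 6 / η ^ 2 with hK₀
  have hη2 : 2 < 1 / η := by rw [lt_div_iff₀ hη0]; linarith
  have hK₀1 : 2048 / η ≤ K₀ := by
    have h1 : 2048 / η = 2048 * (1 / η) := by ring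
    have h2 : K₀ = 10 ^ 6 * (1 / η) ^ 2 := by rw [hK₀]; ring
    rw [h1, h2]
    nlinarith
  have hK₀2 : 1 ≤ K₀ := by
    have h1 : 2048 / η = 2048 * (1 / η) := by ring
    linarith
  set X : ℝ := K₀ ^ (1 / η) with hX
  have hXK : K₀ ≤ X := by
    have := Real.rpow_le_rpow_of_exponent_le hK₀2 (by linarith : (1 : ℝ) ≤ 1 / η)
    rwa [Real.rpow_one] at this
  have hX1 : 1 ≤ X := hK₀2.trans hXK
  have hX0 : 0 < X := by linarith
  have hXη : X ^ η = K₀ := by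
    rw [hX, ← Real.rpow_mul (by linarith), one_div_mul_cancel hη0.ne', Real.rpow_one]
  refine ⟨1 / X, by positivity, ?_⟩
  intro n d lam V _ _ G _ hG hd hdn hlam
  rw [one_div_one_div] at hd
  have hd1 : (1 : ℝ) < d := lt_of_le_of_lt hX1 hd
  have hd0 : (0 : ℝ) < d := by linarith
  set K : ℝ := (d : ℝ) ^ η with hK
  have hKK : K₀ ≤ K := by
    rw [← hXη]
    exact Real.rpow_le_rpow hX0.le hd.le hη0.le
  have hK1 : 1 < K := Real.one_lt_rpow hd1 hη0
  have hKd : K ≤ d := by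
    have := Real.rpow_le_rpow_of_exponent_le hd1.le (by linarith : η ≤ 1)
    rwa [Real.rpow_one] at this
  have hL : (d : ℝ) ^ ((1 : ℝ) - η) = d / K := by
    rw [Real.rpow_sub hd0, Real.rpow_one]
  rw [hL] at hlam
  have hmix : Mixes G n d K := fun A B =>
    mixing hG hlam.le (by positivity) (div_lt_self hd0 hK1) A B
  have hXd : (X * d) ^ 2 ≤ n := by
    have h1 : X * d ≤ Real.sqrt n := by
      rw [one_div, inv_mul_eq_div, lt_div_iff₀ hX0] at hdn
      linarith
    exact (Real.le_sqrt (by positivity) (by positivity)).1 h1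
  refine subdivision_of_mixes_of_large (q := ⌈1 / η⌉₊) hη0 hη1 hG.1 hG.2.1 (by exact_mod_cast hd1.le)
    hmix hKK hKd ?_ ?_ ?_
  · rw [hK, ← Real.rpow_natCast, ← Real.rpow_mul hd0.le]
    have h1 : 1 ≤ η * (⌈1 / η⌉₊ : ℝ) := by
      have := mul_le_mul_of_nonneg_left (Nat.le_ceil (1 / η)) hη0.le
      rwa [mul_one_div_cancel hη0.ne'] at this
    have := Real.rpow_le_rpow_of_exponent_le hd1.le h1
    rwa [Real.rpow_one] at this
  · have h1 := (Nat.ceil_lt_add_one (by positivity : 0 ≤ 1 / η)).le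
    have h2 : 2 / η = 1 / η + 1 / η := by ring
    linarith
  · rw [mul_pow] at hXd
    refine le_trans (mul_le_mul_of_nonneg_right ?_ (by positivity)) hXd
    nlinarith
end
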